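/- arXiv:2312.16447 — 2 statements merged into one kernel-verified Lean document; each statement's English description precedes it below -/
import Mathlib

section
/- The number of spanning trees of the connected Cayley graph D_n = Cay(D_n, b^{±β_1},...,b^{±β_s}, ab^{γ_1},...,ab^{γ_t}) equals τ(n) = (t/n) ∏_{j=1}^{n−1} P(ε_n^j), where ε_n = exp(2πi/n) and P(z) = A(z)A(z^{-1}) − B(z)B(z^{-1}). -/
open DihedralGroup Complex

/-- The Cayley graph of a group with symmetric connection set `S`. -/
def cayleyGraph {G : Type*} [Group G] (S : Set G) : SimpleGraph G :=
  SimpleGraph.fromRel (fun x y => x⁻¹ * y ∈ S)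

/-- The generating set `{b^{±β_1},…,b^{±β_s}, a b^{γ_1},…, a b^{γ_t}}` of `D_n`,
where `b = r 1` and `a = sr 0`. -/
def dihedralGenSet (n : ℕ) {s t : ℕ} (β : Fin s → ℕ) (γ : Fin t → ℕ) :
    Set (DihedralGroup n) :=
  (Set.range fun i => r (β i : ZMod n)) ∪ (Set.range fun i => r (-(β i : ZMod n))) ∪
    (Set.range fun j => sr (γ j : ZMod n))

/-- The number of spanning trees of a graph. -/
noncomputable def numSpanningTrees {V : Type*} (G : SimpleGraph V) : ℕ :=
  Nat.card {H : G.Subgraph // H.IsSpanning ∧ H.coe.IsTree}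


/-! ### Matrix-tree theorem -/

/-- `f` flows into the root `v₀`. -/
def FlowsTo {V : Type*} (v₀ : V) (f : V → V) : Prop :=
  f v₀ = v₀ ∧ ∀ v, ∃ k : ℕ, f^[k] v = v₀

/-- Row matrix of a function. -/
noncomputable def rowMat {V : Type*} [DecidableEq V] (v₀ : V) (f : V → V) : Matrix V V ℂ :=
  fun v => if v = v₀ then Pi.single v₀ 1 else Pi.single v 1 - Pi.single (f v) 1

theorem FlowsTo.exists_depth {V : Type*} {v₀ : V} {f : V → V} (h : FlowsTo v₀ f) :
    ∃ d : V → ℕ, ∀ v, v ≠ v₀ → d (f v) < d v := by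
  classical
  refine ⟨fun v => Nat.find (h.2 v), fun v hv => ?_⟩
  have h1 := Nat.find_spec (h.2 v)
  set k := Nat.find (h.2 v) with hk
  obtain _ | m := k
  · exact absurd h1 hv
  · have : Nat.find (h.2 (f v)) ≤ m := Nat.find_min' _ h1
    simp only
    omega

theorem flowsTo_of_depth {V : Type*} {v₀ : V} {f : V → V} (h0 : f v₀ = v₀)
    (d : V → ℕ) (hd : ∀ v, v ≠ v₀ → d (f v) < d v) : FlowsTo v₀ f := by
  refine ⟨h0, ?_⟩
  suffices ∀ m v, d v = m → ∃ k : ℕ, f^[k] v = v₀ from fun v => this _ v rfl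
  intro m
  induction m using Nat.strong_induction_on with
  | _ m ih =>
    intro v hv
    by_cases hvv : v = v₀
    · exact ⟨0, hvv⟩
    · obtain ⟨k, hk⟩ := ih (d (f v)) (hv ▸ hd v hvv) (f v) rfl
      exact ⟨k + 1, hk⟩

theorem det_rowMat_of_flowsTo {V : Type*} [Fintype V] [DecidableEq V] {v₀ : V} {f : V → V}
    (h : FlowsTo v₀ f) : (rowMat v₀ f).det = 1 := by
  obtain ⟨d, hd⟩ := h.exists_depth
  have hbt : Matrix.BlockTriangular (rowMat v₀ f) (fun v => OrderDual.toDual (d v)) := by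
    intro i j hij
    have hij' : d i < d j := hij
    unfold rowMat
    split_ifs with hi
    · rw [Pi.single_eq_of_ne]
      rintro rfl
      subst hi
      omega
    · have h1 : j ≠ i := by rintro rfl; omega
      have h2 : j ≠ f i := by
        rintro rfl
        have := hd i hi
        omega
      simp [h1, h2]
  rw [hbt.det]
  refine Finset.prod_eq_one fun a _ => ?_
  have : (rowMat v₀ f).toSquareBlock (fun v => OrderDual.toDual (d v)) a = 1 := by
    ext ⟨i, hi⟩ ⟨j, hj⟩
    have hij : d i = d j := by
      have := hi.trans hj.symm
      exact this
    rw [Matrix.toSquareBlock_def]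
    simp only [Matrix.of_apply, Matrix.one_apply, Subtype.mk.injEq]
    unfold rowMat
    split_ifs with h1 h2 h2
    · subst h1; subst h2; simp
    · subst h1; rw [Pi.single_eq_of_ne (Ne.symm h2)]
    · subst h2
      have : i ≠ f i := by
        intro h3
        have := hd i h1
        rw [← h3] at this
        omega
      simp [this]
    · have h4 : j ≠ f i := by
        rintro rfl
        have := hd i h1
        omega
      simp [Ne.symm h2, h4]
  rw [this, Matrix.det_one]

theorem det_rowMat_of_not_flowsTo {V : Type*} [Fintype V] [DecidableEq V] {v₀ : V} {f : V → V}
    (h0 : f v₀ = v₀) (h : ¬ FlowsTo v₀ f) : (rowMat v₀ f).det = 0 := by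
  classical
  rw [← Matrix.exists_mulVec_eq_zero_iff]
  have h' : ∃ v, ¬ ∃ k : ℕ, f^[k] v = v₀ := by
    by_contra hc
    push Not at hc
    exact h ⟨h0, hc⟩
  obtain ⟨w, hw⟩ := h'
  refine ⟨fun v => if ∃ k : ℕ, f^[k] v = v₀ then 0 else 1, ?_, ?_⟩
  · intro hz
    have := congrFun hz w
    simp only [hw, if_false] at this
    exact one_ne_zero this
  · ext v
    rw [Matrix.mulVec]
    unfold rowMat
    split_ifs with hv
    · rw [single_dotProduct]
      simp only [Pi.zero_apply, one_mul]
      rw [if_pos ⟨0, rfl⟩]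
    · rw [sub_dotProduct, single_dotProduct, single_dotProduct]
      have : (∃ k : ℕ, f^[k] v = v₀) ↔ (∃ k : ℕ, f^[k] (f v) = v₀) := by
        constructor
        · rintro ⟨k, hk⟩
          refine ⟨k, ?_⟩
          rw [← Function.iterate_succ_apply, Function.iterate_succ_apply', hk, h0]
        · rintro ⟨k, hk⟩
          exact ⟨k + 1, hk⟩
      simp only [this]
      simp

/-- The graph of a function flowing to the root. -/
def flowGraph {V : Type*} (f : V → V) : SimpleGraph V :=
  SimpleGraph.fromRel (fun x y => f x = y)

theorem flowGraph_isTree {V : Type*} [Fintype V] {v₀ : V} {f : V → V} (h : FlowsTo v₀ f) :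
    (flowGraph f).IsTree := by
  classical
  have hr : ∀ v, (flowGraph f).Reachable v v₀ := by
    intro v
    obtain ⟨k, hk⟩ := h.2 v
    induction k generalizing v with
    | zero => exact hk ▸ SimpleGraph.Reachable.refl _
    | succ k ih =>
      have h1 := ih (f v) hk
      by_cases hv : v = f v
      · rw [hv]; exact h1
      · refine SimpleGraph.Reachable.trans (SimpleGraph.Adj.reachable ?_) h1
        simp [flowGraph, hv]
  have hc : (flowGraph f).Connected :=
    { preconnected := fun u v => (hr u).trans (hr v).symm
      nonempty := ⟨v₀⟩ }
  rw [SimpleGraph.isTree_iff_connected_and_card]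
  refine ⟨hc, le_antisymm ?_ hc.card_vert_le_card_edgeSet_add_one⟩
  have hsub : (flowGraph f).edgeSet ⊆ (fun v => s(v, f v)) '' {v | v ≠ v₀} := by
    intro e
    induction e using Sym2.ind with
    | _ x y =>
      rw [SimpleGraph.mem_edgeSet]
      simp only [flowGraph, SimpleGraph.fromRel_adj]
      rintro ⟨hne, rfl | rfl⟩
      · refine ⟨x, ?_, rfl⟩
        rintro rfl
        exact hne h.1.symm
      · refine ⟨y, ?_, Sym2.eq_swap⟩
        rintro rfl
        exact hne h.1
  have h1 : Nat.card (flowGraph f).edgeSet ≤ Nat.card {v : V | v ≠ v₀} := by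
    rw [Nat.card_coe_set_eq, Nat.card_coe_set_eq]
    exact (Set.ncard_le_ncard hsub (Set.toFinite _)).trans (Set.ncard_image_le (Set.toFinite _))
  have h2 : Nat.card {v : V | v ≠ v₀} + 1 = Nat.card V := by
    have : Fintype.card {v : V | v ≠ v₀} = Fintype.card V - 1 := Set.card_ne_eq v₀
    have hpos : 0 < Fintype.card V := Fintype.card_pos_iff.2 ⟨v₀⟩
    rw [Nat.card_eq_fintype_card, Nat.card_eq_fintype_card, this]
    omega
  omega

theorem flowGraph_injOn {V : Type*} {v₀ : V} {f g : V → V} (hf : FlowsTo v₀ f)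
    (hg : FlowsTo v₀ g) (h : flowGraph f = flowGraph g) : f = g := by
  obtain ⟨d, hd⟩ := hg.exists_depth
  have key : ∀ v, f v ≠ g v → f (g v) ≠ g (g v) ∧ v ≠ v₀ := by
    intro v hv
    have hv0 : v ≠ v₀ := by
      rintro rfl
      exact hv (hf.1.trans hg.1.symm)
    have hgv : g v ≠ v := by
      intro h1
      have := hd v hv0
      rw [h1] at this
      omega
    refine ⟨?_, hv0⟩
    have hadj : (flowGraph f).Adj v (g v) := by
      rw [h]; simp [flowGraph, hgv.symm]
    simp only [flowGraph, SimpleGraph.fromRel_adj] at hadj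
    have hfg : f (g v) = v := by
      rcases hadj.2 with h1 | h1
      · exact absurd h1 hv
      · exact h1
    rw [hfg]
    intro h2
    have h3 := hd v hv0
    have h4 : g v ≠ v₀ := by
      intro h5
      rw [h5, hg.1] at h2
      exact hv0 h2
    have h5 := hd (g v) h4
    rw [← h2] at h5
    omega
  have : ∀ m v, d v = m → f v = g v := by
    intro m
    induction m using Nat.strong_induction_on with
    | _ m ih =>
      intro v hv
      by_contra hne
      obtain ⟨h1, h2⟩ := key v hne
      exact h1 (ih (d (g v)) (hv ▸ hd v h2) _ rfl)
  ext v
  exact this _ v rfl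

theorem exists_flow_of_isTree {V : Type*} (v₀ : V) {T : SimpleGraph V} [Fintype V]
    (hT : T.IsTree) :
    ∃ f : V → V, FlowsTo v₀ f ∧ (∀ v, v ≠ v₀ → T.Adj v (f v)) ∧ flowGraph f = T := by
  classical
  have hstep : ∀ v, ∃ w, (v = v₀ → w = v₀) ∧
      (v ≠ v₀ → T.Adj v w ∧ T.dist w v₀ < T.dist v v₀) := by
    intro v
    by_cases hv : v = v₀
    · exact ⟨v₀, fun _ => rfl, fun h => absurd hv h⟩
    · obtain ⟨p, hp, hlen⟩ := hT.connected.exists_path_of_dist v v₀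
      cases p with
      | nil => exact absurd rfl hv
      | cons hadj q =>
        rename_i w
        refine ⟨w, fun h => absurd h hv, fun _ => ⟨hadj, ?_⟩⟩
        rw [← hlen, SimpleGraph.Walk.length_cons]
        exact Nat.lt_succ_of_le (SimpleGraph.dist_le q)
  choose f hf using hstep
  have hflow : FlowsTo v₀ f :=
    flowsTo_of_depth ((hf v₀).1 rfl) (fun v => T.dist v v₀) (fun v hv => ((hf v).2 hv).2)
  refine ⟨f, hflow, fun v hv => ((hf v).2 hv).1, ?_⟩
  have hle : flowGraph f ≤ T := by
    intro x y
    simp only [flowGraph, SimpleGraph.fromRel_adj]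
    rintro ⟨hne, rfl | rfl⟩
    · have : x ≠ v₀ := by
        rintro rfl
        exact hne hflow.1.symm
      exact ((hf x).2 this).1
    · have : y ≠ v₀ := by
        rintro rfl
        exact hne hflow.1
      exact ((hf y).2 this).1.symm
  have hmin := SimpleGraph.isTree_iff_minimal_connected.1 hT
  exact le_antisymm hle (hmin.2 (flowGraph_isTree hflow).connected hle)

theorem numSpanningTrees_eq {V : Type*} (G : SimpleGraph V) :
    numSpanningTrees G = Nat.card {T : SimpleGraph V // T ≤ G ∧ T.IsTree} := by
  unfold numSpanningTrees
  refine Nat.card_congr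
    { toFun := fun H => ⟨H.1.spanningCoe, H.1.spanningCoe_le,
        (H.1.spanningCoeEquivCoeOfSpanning H.2.1).isTree_iff.2 H.2.2⟩
      invFun := fun T => ⟨SimpleGraph.toSubgraph T.1 T.2.1,
        SimpleGraph.toSubgraph.isSpanning T.1 T.2.1,
        ((SimpleGraph.toSubgraph T.1 T.2.1).spanningCoeEquivCoeOfSpanning
          (SimpleGraph.toSubgraph.isSpanning T.1 T.2.1)).isTree_iff.1 T.2.2⟩
      left_inv := ?_
      right_inv := ?_ }
  · rintro ⟨H, hs, ht⟩
    apply Subtype.ext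
    refine SimpleGraph.Subgraph.ext ?_ rfl
    exact (SimpleGraph.Subgraph.isSpanning_iff.1 hs).symm
  · rintro ⟨T, h1, h2⟩
    rfl

theorem matrix_tree_aux {V : Type*} [Fintype V] [DecidableEq V] (G : SimpleGraph V)
    [DecidableRel G.Adj] (v₀ : V) :
    (numSpanningTrees G : ℂ) = ((G.lapMatrix ℂ).updateRow v₀ (Pi.single v₀ 1)).det := by
  classical
  set S : V → Finset V := fun v => if v = v₀ then {v₀} else G.neighborFinset v with hS
  set g : V → V → (V → ℂ) :=
    fun v u => if v = v₀ then Pi.single v₀ 1 else Pi.single v 1 - Pi.single u 1 with hg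
  have hrow : (G.lapMatrix ℂ).updateRow v₀ (Pi.single v₀ 1) = fun v => ∑ u ∈ S v, g v u := by
    ext v w
    simp only [hS, hg]
    by_cases hv : v = v₀
    · subst hv; simp
    · rw [Matrix.updateRow_ne hv]
      simp only [hv, if_false]
      rw [Finset.sum_apply]
      simp only [Pi.sub_apply, Finset.sum_sub_distrib, Pi.single_apply, Finset.sum_const,
        SimpleGraph.card_neighborFinset_eq_degree, Finset.sum_ite_eq]
      simp [SimpleGraph.lapMatrix, SimpleGraph.degMatrix, Matrix.diagonal_apply, eq_comm]
  have hexp : ((G.lapMatrix ℂ).updateRow v₀ (Pi.single v₀ 1)).det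
      = ∑ f ∈ Fintype.piFinset S, (rowMat v₀ f).det := by
    rw [hrow]
    exact (Matrix.detRowAlternating (n := V) (R := ℂ)).toMultilinearMap.map_sum_finset g S
  have hS0 : ∀ f ∈ Fintype.piFinset S, f v₀ = v₀ := by
    intro f hf
    have := Fintype.mem_piFinset.1 hf v₀
    simpa [hS] using this
  rw [hexp, numSpanningTrees_eq]
  have h1 : ∑ f ∈ Fintype.piFinset S, (rowMat v₀ f).det
      = ∑ f ∈ Fintype.piFinset S, if FlowsTo v₀ f then (1 : ℂ) else 0 := by
    refine Finset.sum_congr rfl fun f hf => ?_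
    split_ifs with h
    · exact det_rowMat_of_flowsTo h
    · exact det_rowMat_of_not_flowsTo (hS0 f hf) h
  rw [h1, Finset.sum_boole]
  congr 1
  rw [← Nat.card_eq_finsetCard]
  symm
  refine Nat.card_congr (Equiv.ofBijective (fun f => ⟨flowGraph f.1, ?_, ?_⟩) ⟨?_, ?_⟩)
  · obtain ⟨f, hf⟩ := f
    rw [Finset.mem_filter, Fintype.mem_piFinset] at hf
    have hadj : ∀ v, v ≠ v₀ → G.Adj v (f v) := by
      intro v hv
      simpa [hS, hv] using hf.1 v
    intro x y
    simp only [flowGraph, SimpleGraph.fromRel_adj]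
    rintro ⟨hne, rfl | rfl⟩
    · refine hadj x ?_
      rintro rfl
      exact hne hf.2.1.symm
    · refine (hadj y ?_).symm
      rintro rfl
      exact hne hf.2.1
  · exact flowGraph_isTree (Finset.mem_filter.1 f.2).2
  · rintro ⟨f, hf⟩ ⟨g', hg'⟩ h
    exact Subtype.ext (flowGraph_injOn (Finset.mem_filter.1 hf).2 (Finset.mem_filter.1 hg').2
      (congrArg Subtype.val h))
  · rintro ⟨T, hTG, hT⟩
    obtain ⟨f, hf, hadj, hfT⟩ := exists_flow_of_isTree v₀ hT
    refine ⟨⟨f, ?_⟩, Subtype.ext hfT⟩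
    rw [Finset.mem_filter, Fintype.mem_piFinset]
    refine ⟨fun v => ?_, hf⟩
    by_cases hv : v = v₀
    · subst hv; simp [hS, hf.1]
    · simpa [hS, hv] using hTG (hadj v hv)

theorem matrix_tree {V : Type*} [Fintype V] [DecidableEq V] [Nonempty V] (G : SimpleGraph V)
    [DecidableRel G.Adj] :
    (G.lapMatrix ℂ + Matrix.of fun _ _ => 1).det
      = (Fintype.card V : ℂ) ^ 2 * numSpanningTrees G := by
  obtain ⟨v₀⟩ := ‹Nonempty V›
  set L := G.lapMatrix ℂ with hL
  set e : V → ℂ := Pi.single v₀ 1 with he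
  have hL1 : L.mulVec 1 = 0 := G.lapMatrix_mulVec_const_eq_zero
  have hL2 : Matrix.vecMul 1 L = 0 := by
    rw [← Matrix.mulVec_transpose, (G.isSymm_lapMatrix ℂ).eq]
    exact hL1
  have hdetL : L.det = 0 := by
    rw [← Matrix.exists_mulVec_eq_zero_iff]
    refine ⟨1, ?_, hL1⟩
    intro h
    exact one_ne_zero (congrFun h v₀)
  have hdet : (L + Matrix.vecMulVec e e).det = numSpanningTrees G := by
    rw [matrix_tree_aux G v₀]
    have : L + Matrix.vecMulVec e e = L.updateRow v₀ (L v₀ + e) := by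
      ext i j
      by_cases hi : i = v₀
      · subst hi; simp [Matrix.vecMulVec_apply, he]
      · simp [Matrix.vecMulVec_apply, he, hi]
    rw [this, Matrix.det_updateRow_add, Matrix.updateRow_eq_self, hdetL, zero_add]
  have hfac : L + Matrix.of (fun _ _ => 1) = (1 + Matrix.vecMulVec (1 - e) 1) *
      (L + Matrix.vecMulVec e e) * (1 + Matrix.vecMulVec 1 (1 - e)) := by
    have h1e : (1 : V → ℂ) ⬝ᵥ e = 1 := by simp [he]
    have he1 : e ⬝ᵥ (1 : V → ℂ) = 1 := by simp [he]
    have hJ : (Matrix.of (fun _ _ => 1) : Matrix V V ℂ) = Matrix.vecMulVec 1 1 := by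
      ext i j; simp [Matrix.vecMulVec_apply]
    rw [hJ]
    have s1 : (1 + Matrix.vecMulVec (1 - e) 1) * (L + Matrix.vecMulVec e e)
        = L + Matrix.vecMulVec 1 e := by
      rw [add_mul, one_mul, mul_add, Matrix.vecMulVec_mul, hL2,
        Matrix.vecMulVec_mul_vecMulVec, h1e]
      ext i j
      simp [Matrix.vecMulVec_apply]
      ring
    have s2 : (L + Matrix.vecMulVec 1 e) * (1 + Matrix.vecMulVec 1 (1 - e))
        = L + Matrix.vecMulVec 1 1 := by
      rw [mul_add, mul_one, add_mul, Matrix.mul_vecMulVec, hL1,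
        Matrix.vecMulVec_mul_vecMulVec, he1]
      ext i j
      simp
    rw [s1, s2]
  have hd1 : (1 + Matrix.vecMulVec (1 - e) 1 : Matrix V V ℂ).det = Fintype.card V := by
    rw [Matrix.vecMulVec_eq Unit, Matrix.det_one_add_replicateCol_mul_replicateRow]
    simp [he]
  have hd2 : (1 + Matrix.vecMulVec 1 (1 - e) : Matrix V V ℂ).det = Fintype.card V := by
    rw [Matrix.vecMulVec_eq Unit, Matrix.det_one_add_replicateCol_mul_replicateRow]
    simp [he]
  rw [hfac, Matrix.det_mul, Matrix.det_mul, hd1, hd2, hdet]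
  ring

/-! ### Block circulant determinant -/

theorem det_fromBlocks_diagonal {Z : Type*} [Fintype Z] [DecidableEq Z] (a b c d : Z → ℂ) :
    (Matrix.fromBlocks (Matrix.diagonal a) (Matrix.diagonal b) (Matrix.diagonal c)
      (Matrix.diagonal d)).det = ∏ k, (a k * d k - b k * c k) := by
  set e : Fin 2 × Z ≃ Z ⊕ Z :=
    (finTwoEquiv.prodCongr (Equiv.refl Z)).trans (Equiv.boolProdEquivSum Z) with he
  rw [← Matrix.det_submatrix_equiv_self e]
  have : (Matrix.fromBlocks (Matrix.diagonal a) (Matrix.diagonal b) (Matrix.diagonal c)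
      (Matrix.diagonal d)).submatrix e e
      = Matrix.blockDiagonal (fun k => !![a k, b k; c k, d k]) := by
    ext ⟨i, k⟩ ⟨j, l⟩
    fin_cases i <;> fin_cases j <;>
      simp [he, Matrix.blockDiagonal_apply, Matrix.diagonal_apply, finTwoEquiv,
        Equiv.boolProdEquivSum]
  rw [this, Matrix.det_blockDiagonal]
  simp [Matrix.det_fin_two]

theorem det_dihedral_blocks {n : ℕ} [NeZero n] (ψ : AddChar (ZMod n) ℂ) (hψ : ψ.IsPrimitive)
    (c h : ZMod n → ℂ) :
    (Matrix.fromBlocks (Matrix.of fun i j => c (j - i)) (Matrix.of fun i j => h (i + j))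
      (Matrix.of fun i j => h (i + j)) (Matrix.of fun i j => c (j - i))).det
    = ∏ k, ((∑ j, c j * ψ (j * k)) * (∑ j, c j * ψ (j * -k))
        - (∑ j, h j * ψ (j * k)) * (∑ j, h j * ψ (j * -k))) := by
  set F : Matrix (ZMod n) (ZMod n) ℂ := Matrix.of fun j k => ψ (j * k) with hF
  set F' : Matrix (ZMod n) (ZMod n) ℂ := Matrix.of fun j k => ψ (j * -k) with hF'
  have hn : (n : ℂ) ≠ 0 := Nat.cast_ne_zero.2 (NeZero.ne n)
  have hFF : F * F' = (n : ℂ) • (1 : Matrix (ZMod n) (ZMod n) ℂ) := by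
    ext i j
    rw [Matrix.mul_apply]
    have h1 : ∀ k, F i k * F' k j = ψ (k * (i - j)) := by
      intro k
      simp only [hF, hF', Matrix.of_apply]
      rw [← AddChar.map_add_eq_mul]
      congr 1
      ring
    simp_rw [h1]
    rw [AddChar.sum_mulShift _ hψ]
    simp [Matrix.one_apply, sub_eq_zero, ZMod.card]
  have hdet : F.det * F'.det ≠ 0 := by
    rw [← Matrix.det_mul, hFF, Matrix.det_smul]
    simp [hn]
  have conv : ∀ (u : ZMod n → ℂ) (i k : ZMod n),
      ∑ j, u (j - i) * ψ (j * k) = ψ (i * k) * ∑ j, u j * ψ (j * k) := by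
    intro u i k
    rw [Finset.mul_sum, ← Equiv.sum_comp (Equiv.addRight i)]
    refine Finset.sum_congr rfl fun j _ => ?_
    simp only [Equiv.coe_addRight, add_sub_cancel_right, add_mul, AddChar.map_add_eq_mul]
    ring
  have conv' : ∀ (u : ZMod n → ℂ) (i k : ZMod n),
      ∑ j, u (i + j) * ψ (j * k) = ψ (i * -k) * ∑ j, u j * ψ (j * k) := by
    intro u i k
    have := conv u (-i) k
    simp only [sub_neg_eq_add] at this
    rw [show i * -k = -i * k by ring, ← this]
    simp_rw [add_comm i]
  set C : Matrix (ZMod n) (ZMod n) ℂ := Matrix.of fun i j => c (j - i) with hC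
  set H : Matrix (ZMod n) (ZMod n) ℂ := Matrix.of fun i j => h (i + j) with hH
  have e1 : C * F = F * Matrix.diagonal (fun k => ∑ j, c j * ψ (j * k)) := by
    ext i k
    rw [Matrix.mul_diagonal, Matrix.mul_apply]
    exact conv c i k
  have e2 : H * F' = F * Matrix.diagonal (fun k => ∑ j, h j * ψ (j * -k)) := by
    ext i k
    rw [Matrix.mul_diagonal, Matrix.mul_apply]
    have := conv' h i (-k)
    rw [neg_neg] at this
    exact this
  have e3 : H * F = F' * Matrix.diagonal (fun k => ∑ j, h j * ψ (j * k)) := by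
    ext i k
    rw [Matrix.mul_diagonal, Matrix.mul_apply]
    exact conv' h i k
  have e4 : C * F' = F' * Matrix.diagonal (fun k => ∑ j, c j * ψ (j * -k)) := by
    ext i k
    rw [Matrix.mul_diagonal, Matrix.mul_apply]
    exact conv c i (-k)
  have hmul : Matrix.fromBlocks C H H C * Matrix.fromBlocks F 0 0 F'
      = Matrix.fromBlocks F 0 0 F' * Matrix.fromBlocks
        (Matrix.diagonal (fun k => ∑ j, c j * ψ (j * k)))
        (Matrix.diagonal (fun k => ∑ j, h j * ψ (j * -k)))
        (Matrix.diagonal (fun k => ∑ j, h j * ψ (j * k)))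
        (Matrix.diagonal (fun k => ∑ j, c j * ψ (j * -k))) := by
    rw [Matrix.fromBlocks_multiply, Matrix.fromBlocks_multiply]
    simp [e1, e2, e3, e4]
  have hd := congrArg Matrix.det hmul
  rw [Matrix.det_mul, Matrix.det_mul, Matrix.det_fromBlocks_zero₂₁, det_fromBlocks_diagonal,
    mul_comm] at hd
  rw [mul_left_cancel₀ hdet hd]
  refine Finset.prod_congr rfl fun k _ => ?_
  ring

/-! ### The Cayley graph of the dihedral group -/

/-- Elements of the dihedral group as a sum type. -/
def dihedralSumEquiv (n : ℕ) : ZMod n ⊕ ZMod n ≃ DihedralGroup n where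
  toFun x := Sum.elim r sr x
  invFun x := match x with
    | r i => Sum.inl i
    | sr i => Sum.inr i
  left_inv := by rintro (x | x) <;> rfl
  right_inv := by rintro (x | x) <;> rfl

theorem sum_ind_of_injective {ι Z : Type*} [Fintype ι] [DecidableEq Z] (u : ι → Z)
    (hu : Function.Injective u) (k : Z) [Decidable (k ∈ Set.range u)] :
    (∑ i, if k = u i then (1 : ℂ) else 0) = if k ∈ Set.range u then 1 else 0 := by
  classical
  split_ifs with h
  · obtain ⟨i, rfl⟩ := h
    simp [hu.eq_iff]
  · refine Finset.sum_eq_zero fun i _ => ?_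
    rw [if_neg]
    rintro rfl
    exact h ⟨i, rfl⟩

/-- Indicator of the connection set. -/
noncomputable def genInd (n : ℕ) {s t : ℕ} (β : Fin s → ℕ) (γ : Fin t → ℕ) :
    DihedralGroup n → ℂ
  | r k => ∑ i, ((if k = (β i : ZMod n) then 1 else 0) + if k = -(β i : ZMod n) then 1 else 0)
  | sr k => ∑ j, if k = (γ j : ZMod n) then 1 else 0

theorem natCast_zmod_inj {n a b : ℕ} (ha : a < n) (hb : b < n)
    (h : (a : ZMod n) = (b : ZMod n)) : a = b := by
  have := (ZMod.natCast_eq_natCast_iff' a b n).1 h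
  rwa [Nat.mod_eq_of_lt ha, Nat.mod_eq_of_lt hb] at this

theorem beta_ne_neg {n a b : ℕ} (ha : 0 < a) (ha' : 2 * a < n) (hb' : 2 * b < n) :
    (a : ZMod n) ≠ -(b : ZMod n) := by
  intro h
  have h1 : ((a + b : ℕ) : ZMod n) = 0 := by
    push_cast
    rw [h]
    ring
  rw [ZMod.natCast_eq_zero_iff] at h1
  have := Nat.le_of_dvd (by omega) h1
  omega

open Classical in
theorem genInd_eq (n s t : ℕ) [NeZero n] (β : Fin s → ℕ) (γ : Fin t → ℕ)
    (hβpos : ∀ i, 0 < β i) (hβmono : StrictMono β) (hβlt : ∀ i, 2 * β i < n)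
    (hγmono : StrictMono γ) (hγle : ∀ j, γ j ≤ n - 1) (x : DihedralGroup n) :
    genInd n β γ x = if x ∈ dihedralGenSet n β γ then 1 else 0 := by
  have hn : 0 < n := Nat.pos_of_ne_zero (NeZero.ne n)
  rcases x with k | k
  · set u : Fin s ⊕ Fin s → ZMod n :=
      Sum.elim (fun i => (β i : ZMod n)) (fun i => -(β i : ZMod n)) with hu
    have hβi : ∀ i j, (β i : ZMod n) = (β j : ZMod n) → i = j := by
      intro i j h
      have h1 := hβlt i
      have h2 := hβlt j
      exact hβmono.injective (natCast_zmod_inj (by omega) (by omega) h)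
    have hinj : Function.Injective u := by
      rintro (i | i) (j | j) h
      · exact congrArg _ (hβi i j h)
      · exact absurd h (beta_ne_neg (hβpos i) (hβlt i) (hβlt j))
      · exact absurd h.symm (beta_ne_neg (hβpos j) (hβlt j) (hβlt i))
      · exact congrArg _ (hβi i j (neg_injective h))
    have := sum_ind_of_injective u hinj k
    rw [Fintype.sum_sum_type] at this
    simp only [genInd, Finset.sum_add_distrib]
    refine this.trans ?_
    congr 1
    simp [dihedralGenSet, hu, eq_comm]
  · have hinj : Function.Injective (fun j => (γ j : ZMod n)) := by
      intro i j h
      have h1 := hγle i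
      have h2 := hγle j
      exact hγmono.injective (natCast_zmod_inj (by omega) (by omega) h)
    have := sum_ind_of_injective _ hinj k
    simp only [genInd]
    refine this.trans ?_
    congr 1
    simp [dihedralGenSet]

theorem cayley_adj_iff (n s t : ℕ) [NeZero n] (β : Fin s → ℕ) (γ : Fin t → ℕ)
    (hβpos : ∀ i, 0 < β i) (hβlt : ∀ i, 2 * β i < n) (x y : DihedralGroup n) :
    (cayleyGraph (dihedralGenSet n β γ)).Adj x y ↔ x⁻¹ * y ∈ dihedralGenSet n β γ := by
  have hinv : ∀ z ∈ dihedralGenSet n β γ, z⁻¹ ∈ dihedralGenSet n β γ := by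
    rintro z ((⟨i, rfl⟩ | ⟨i, rfl⟩) | ⟨i, rfl⟩)
    · exact Or.inl (Or.inr ⟨i, by simp⟩)
    · exact Or.inl (Or.inl ⟨i, by simp⟩)
    · exact Or.inr ⟨i, by simp⟩
  have hone : (1 : DihedralGroup n) ∉ dihedralGenSet n β γ := by
    have h0 : ∀ i, (β i : ZMod n) ≠ 0 := by
      intro i h
      rw [ZMod.natCast_eq_zero_iff] at h
      have h1 := Nat.le_of_dvd (hβpos i) h
      have h2 := hβlt i
      omega
    rw [DihedralGroup.one_def]
    rintro ((⟨i, hi⟩ | ⟨i, hi⟩) | ⟨i, hi⟩)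
    · exact h0 i (by simpa using DihedralGroup.r.inj hi)
    · exact h0 i (by simpa using DihedralGroup.r.inj hi)
    · cases hi
  rw [cayleyGraph, SimpleGraph.fromRel_adj]
  constructor
  · rintro ⟨-, h | h⟩
    · exact h
    · have := hinv _ h
      simpa using this
  · intro h
    refine ⟨?_, Or.inl h⟩
    rintro rfl
    rw [inv_mul_cancel] at h
    exact hone h

theorem sum_genInd (n s t : ℕ) [NeZero n] (β : Fin s → ℕ) (γ : Fin t → ℕ) :
    ∑ y, genInd n β γ y = 2 * s + t := by
  rw [← (dihedralSumEquiv n).sum_comp, Fintype.sum_sum_type]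
  simp only [dihedralSumEquiv, Equiv.coe_fn_mk, Sum.elim_inl, Sum.elim_inr, genInd]
  rw [Finset.sum_comm, Finset.sum_comm (s := Finset.univ) (t := (Finset.univ : Finset (Fin t)))]
  simp [Finset.sum_add_distrib]
  ring

/-- First block symbol. -/
noncomputable def symC (n : ℕ) {s : ℕ} (t : ℕ) (β : Fin s → ℕ) (k : ZMod n) : ℂ :=
  (if k = 0 then (2 * s + t : ℂ) else 0)
    - ∑ i, ((if k = (β i : ZMod n) then 1 else 0) + if k = -(β i : ZMod n) then 1 else 0) + 1

/-- Second block symbol. -/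
noncomputable def symH (n : ℕ) {t : ℕ} (γ : Fin t → ℕ) (k : ZMod n) : ℂ :=
  -(∑ j, if k = (γ j : ZMod n) then 1 else 0) + 1

open Classical in
theorem lap_blocks (n s t : ℕ) [NeZero n] (β : Fin s → ℕ) (γ : Fin t → ℕ)
    (hβpos : ∀ i, 0 < β i) (hβmono : StrictMono β) (hβlt : ∀ i, 2 * β i < n)
    (hγmono : StrictMono γ) (hγle : ∀ j, γ j ≤ n - 1) :
    ((cayleyGraph (dihedralGenSet n β γ)).lapMatrix ℂ + Matrix.of fun _ _ => 1).submatrix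
      (dihedralSumEquiv n) (dihedralSumEquiv n) =
    Matrix.fromBlocks (Matrix.of fun i j => symC n t β (j - i))
      (Matrix.of fun i j => symH n γ (i + j))
      (Matrix.of fun i j => symH n γ (i + j)) (Matrix.of fun i j => symC n t β (j - i)) := by
  set G := cayleyGraph (dihedralGenSet n β γ) with hG
  have hadj : ∀ x y, G.adjMatrix ℂ x y = genInd n β γ (x⁻¹ * y) := by
    intro x y
    rw [genInd_eq n s t β γ hβpos hβmono hβlt hγmono hγle, SimpleGraph.adjMatrix_apply]
    simp only [hG, cayley_adj_iff n s t β γ hβpos hβlt]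
  have hdeg : ∀ x, (G.degree x : ℂ) = 2 * s + t := by
    intro x
    rw [← sum_genInd n s t β γ, SimpleGraph.degree_eq_sum_if_adj,
      ← Equiv.sum_comp (Equiv.mulLeft x⁻¹) (genInd n β γ)]
    refine Finset.sum_congr rfl fun y _ => ?_
    rw [Equiv.coe_mulLeft, ← hadj, SimpleGraph.adjMatrix_apply]
  have hent : ∀ x y, (G.lapMatrix ℂ + Matrix.of fun _ _ => 1 : Matrix _ _ ℂ) x y =
      (if x = y then (2 * s + t : ℂ) else 0) - genInd n β γ (x⁻¹ * y) + 1 := by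
    intro x y
    rw [Matrix.add_apply, SimpleGraph.lapMatrix, Matrix.sub_apply, hadj,
      SimpleGraph.degMatrix, Matrix.diagonal_apply, hdeg, Matrix.of_apply]
  ext (i | i) (j | j) <;> rw [Matrix.submatrix_apply, hent]
  · simp [dihedralSumEquiv, genInd, symC, sub_eq_zero, eq_comm, neg_add_eq_sub]
  · simp [dihedralSumEquiv, genInd, symH, add_comm]
  · simp [dihedralSumEquiv, genInd, symH]
  · simp [dihedralSumEquiv, genInd, symC, sub_eq_zero, eq_comm]

theorem not_connected_zero (s t : ℕ) (β : Fin s → ℕ) (γ : Fin t → ℕ)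
    (hβlt : ∀ i, 2 * β i < 0) (hγle : ∀ j, γ j ≤ 0 - 1) :
    ¬ (cayleyGraph (dihedralGenSet 0 β γ)).Connected := by
  intro hc
  have hS : ∀ z ∈ dihedralGenSet 0 β γ, z = sr 0 := by
    rintro z ((⟨i, rfl⟩ | ⟨i, rfl⟩) | ⟨i, rfl⟩)
    · exact absurd (hβlt i) (by omega)
    · exact absurd (hβlt i) (by omega)
    · have : γ i = 0 := by
        have := hγle i
        omega
      simp [this]
  have hadj : ∀ x y, (cayleyGraph (dihedralGenSet 0 β γ)).Adj x y → y = x * sr 0 := by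
    intro x y h
    rw [cayleyGraph, SimpleGraph.fromRel_adj] at h
    rcases h.2 with h | h
    · rw [← hS _ h]; simp
    · have := hS _ h
      have h2 : (y⁻¹ * x)⁻¹ = sr 0 := by rw [this]; simp
      rw [← h2]; simp
  have hwalk : ∀ (x y : DihedralGroup 0), (cayleyGraph (dihedralGenSet 0 β γ)).Walk x y →
      (x = 1 ∨ x = sr 0) → (y = 1 ∨ y = sr 0) := by
    intro x y w
    induction w with
    | nil => exact id
    | cons h _ ih =>
      intro hx
      apply ih
      have := hadj _ _ h
      rcases hx with rfl | rfl
      · right; simpa using this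
      · left; simpa using this
  obtain ⟨w⟩ := hc.preconnected 1 (r 1)
  rcases hwalk _ _ w (Or.inl rfl) with h | h
  · rw [DihedralGroup.one_def] at h
    have := DihedralGroup.r.inj h
    exact absurd this (by decide)
  · cases h

theorem sum_symC (n s t : ℕ) [NeZero n] (ψ : AddChar (ZMod n) ℂ) (hψ : ψ.IsPrimitive)
    (β : Fin s → ℕ) (k : ZMod n) :
    ∑ j, symC n t β j * ψ (j * k) = (2 * s + t : ℂ)
      - ∑ i, (ψ ((β i : ZMod n) * k) + ψ (-((β i : ZMod n) * k))) + if k = 0 then (n : ℂ) else 0 := by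
  have h1 := AddChar.sum_mulShift k hψ
  rw [ZMod.card] at h1
  simp only [symC, add_mul, sub_mul, Finset.sum_add_distrib, Finset.sum_sub_distrib, one_mul, h1,
    Finset.sum_mul]
  rw [Finset.sum_comm, Finset.sum_comm (s := Finset.univ) (t := (Finset.univ : Finset (Fin s)))]
  simp

theorem sum_symH (n t : ℕ) [NeZero n] (ψ : AddChar (ZMod n) ℂ) (hψ : ψ.IsPrimitive)
    (γ : Fin t → ℕ) (k : ZMod n) :
    ∑ j, symH n γ j * ψ (j * k) =
      -∑ i, ψ ((γ i : ZMod n) * k) + if k = 0 then (n : ℂ) else 0 := by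
  have h1 := AddChar.sum_mulShift k hψ
  rw [ZMod.card] at h1
  simp only [symH, add_mul, neg_mul, Finset.sum_add_distrib, Finset.sum_neg_distrib, one_mul, h1,
    Finset.sum_mul]
  rw [Finset.sum_comm]
  simp

theorem prod_zmod (n : ℕ) [NeZero n] (g : ZMod n → ℂ) :
    ∏ k, g k = g 0 * ∏ j ∈ Finset.Ico 1 n, g (j : ZMod n) := by
  have h : ∏ k, g k = ∏ j ∈ Finset.range n, g (j : ZMod n) := by
    refine Finset.prod_nbij' ZMod.val (fun j => (j : ZMod n)) ?_ ?_ ?_ ?_ ?_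
    · intro a _
      exact Finset.mem_range.2 (ZMod.val_lt a)
    · intro a _
      exact Finset.mem_univ _
    · intro a _
      exact ZMod.natCast_zmod_val a
    · intro a ha
      exact ZMod.val_cast_of_lt (Finset.mem_range.1 ha)
    · intro a _
      rw [ZMod.natCast_zmod_val]
  rw [h, Finset.range_eq_Ico, Finset.prod_eq_prod_Ico_succ_bot (Nat.pos_of_ne_zero (NeZero.ne n))]
  simp

theorem stmt12 (n s t : ℕ) (β : Fin s → ℕ) (γ : Fin t → ℕ)
    (hβpos : ∀ i, 0 < β i) (hβmono : StrictMono β) (hβlt : ∀ i, 2 * β i < n)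
    (hγmono : StrictMono γ) (hγle : ∀ j, γ j ≤ n - 1) (ht : 0 < t)
    (hconn : (cayleyGraph (dihedralGenSet n β γ)).Connected)
    (A B P : ℂ → ℂ)
    (hA : ∀ z : ℂ, z ≠ 0 → A z = (2 * s + t : ℂ) - ∑ i, (z ^ (β i : ℤ) + z ^ (-(β i : ℤ))))
    (hB : ∀ z : ℂ, z ≠ 0 → B z = -∑ i, z ^ (γ i : ℤ))
    (hP : ∀ z : ℂ, z ≠ 0 → P z = A z * A z⁻¹ - B z * B z⁻¹)
    (ε : ℂ) (hε : ε = Complex.exp (2 * Real.pi * Complex.I / n)) :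
    (numSpanningTrees (cayleyGraph (dihedralGenSet n β γ)) : ℂ) =
      (t / n : ℂ) * ∏ j ∈ Finset.Ico 1 n, P (ε ^ j) := by
  classical
  rcases Nat.eq_zero_or_pos n with rfl | hn
  · exact absurd hconn (not_connected_zero s t β γ hβlt hγle)
  haveI : NeZero n := ⟨hn.ne'⟩
  have hn0 : (n : ℂ) ≠ 0 := Nat.cast_ne_zero.2 hn.ne'
  have hprim : IsPrimitiveRoot ε n := hε ▸ Complex.isPrimitiveRoot_exp n hn.ne'
  have hε0 : ε ≠ 0 := hprim.ne_zero hn.ne'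
  set ψ : AddChar (ZMod n) ℂ :=
    AddChar.zmodChar n ((IsPrimitiveRoot.iff_def ε n).mp hprim).left with hψdef
  have hψ : ψ.IsPrimitive := AddChar.zmodChar_primitive_of_primitive_root n hprim
  have hψn : ∀ a : ℕ, ψ (a : ZMod n) = ε ^ a := fun a => AddChar.zmodChar_apply' _ a
  have hψA : ∀ a j : ℕ, ψ ((a : ZMod n) * (j : ZMod n)) = (ε ^ j) ^ (a : ℤ) := by
    intro a j
    rw [← Nat.cast_mul, hψn, zpow_natCast, ← pow_mul, mul_comm]
  have hψA' : ∀ a j : ℕ, ψ (-((a : ZMod n) * (j : ZMod n))) = (ε ^ j) ^ (-(a : ℤ)) := by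
    intro a j
    rw [AddChar.map_neg_eq_inv, hψA, zpow_neg]
  have hdet := matrix_tree (cayleyGraph (dihedralGenSet n β γ))
  rw [← Matrix.det_submatrix_equiv_self (dihedralSumEquiv n),
    lap_blocks n s t β γ hβpos hβmono hβlt hγmono hγle, det_dihedral_blocks ψ hψ,
    prod_zmod] at hdet
  have hcard : (Fintype.card (DihedralGroup n) : ℂ) = 2 * n := by
    rw [DihedralGroup.card]
    push_cast
    ring
  rw [hcard] at hdet
  have hprod : ∏ j ∈ Finset.Ico 1 n, P (ε ^ j) = ∏ j ∈ Finset.Ico 1 n,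
      ((∑ l, symC n t β l * ψ (l * (j : ZMod n))) * (∑ l, symC n t β l * ψ (l * -(j : ZMod n)))
        - (∑ l, symH n γ l * ψ (l * (j : ZMod n)))
          * (∑ l, symH n γ l * ψ (l * -(j : ZMod n)))) := by
    refine Finset.prod_congr rfl fun j hj => ?_
    rw [Finset.mem_Ico] at hj
    have hj0 : (j : ZMod n) ≠ 0 := by
      intro h
      rw [ZMod.natCast_eq_zero_iff] at h
      have := Nat.le_of_dvd (by omega) h
      omega
    have hz : ε ^ j ≠ 0 := pow_ne_zero _ hε0
    rw [sum_symC n s t ψ hψ, sum_symC n s t ψ hψ, sum_symH n t ψ hψ, sum_symH n t ψ hψ, hP _ hz,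
      hA _ hz, hA _ (inv_ne_zero hz), hB _ hz, hB _ (inv_ne_zero hz)]
    simp only [hj0, neg_eq_zero, if_false, add_zero, mul_neg, neg_neg, hψA, hψA', inv_zpow',
      neg_neg]
  rw [← hprod, sum_symC n s t ψ hψ, sum_symC n s t ψ hψ, sum_symH n t ψ hψ,
    sum_symH n t ψ hψ] at hdet
  simp only [neg_zero, mul_zero, AddChar.map_zero_eq_one, if_true, Finset.sum_const,
    Finset.card_univ, Fintype.card_fin, nsmul_eq_mul, mul_one] at hdet
  have h4 : ((2 * n : ℂ)) ^ 2 ≠ 0 := pow_ne_zero _ (mul_ne_zero two_ne_zero hn0)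
  apply mul_left_cancel₀ h4
  rw [← hdet]
  field_simp
  ring
end

section
/- Let τ(n) be the number of spanning trees in the connected Cayley graph D_n = Cay(D_n, b^{±β_1},...,b^{±β_s}, ab^{γ_1},...,ab^{γ_t}), and let δ be the square-free part of ξ = (2β_odd + γ_odd)(2β_odd + γ_even). Then there exists an integer sequence a(n) such that τ(n) = n·t·a(n)² when n is odd, and τ(n) = n·t·δ·a(n)² when n is even. -/
open DihedralGroup

namespace MT
open Finset Matrix

set_option linter.unusedSectionVars false

variable {V : Type*} [Fintype V] [DecidableEq V]

/-- every vertex reaches the root under iteration of `f` -/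
def Acyc (root : V) (f : V → V) : Prop := ∀ v, ∃ k, f^[k] v = root

lemma Acyc.exists_depth {root : V} {f : V → V} (h : Acyc root f) :
    ∃ d : V → ℕ, d root = 0 ∧ ∀ v, v ≠ root → d v = d (f v) + 1 := by
  classical
  refine ⟨fun v => Nat.find (h v), ?_, ?_⟩
  · simp
  · intro v hv
    have h0 : ¬ (f^[0] v = root) := by simpa using hv
    have := Nat.find_comp_succ (h v) (h (f v)) h0
    simpa using this

def Kmat (root : V) (f : V → V) : Matrix V V ℤ := fun v =>
  if v = root then Pi.single root 1 else Pi.single v 1 - Pi.single (f v) 1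

lemma det_Kmat_acyc {root : V} {f : V → V} (h : Acyc root f) : (Kmat root f).det = 1 := by
  obtain ⟨d, h0, hd⟩ := h.exists_depth
  have hb : (Kmat root f).BlockTriangular (fun v => OrderDual.toDual (d v)) := by
    intro i j hij
    have hij' : d i < d j := hij
    have hne : j ≠ i := by rintro rfl; omega
    unfold Kmat
    split_ifs with hi
    · subst hi; simp [hne]
    · have : j ≠ f i := by
        rintro rfl
        have := hd i hi
        omega
      simp [hne, this]
  rw [hb.det]
  apply Finset.prod_eq_one
  intro a _
  have : (Kmat root f).toSquareBlock (fun v => OrderDual.toDual (d v)) a = 1 := by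
    ext ⟨i, hi⟩ ⟨j, hj⟩
    have hij : d i = d j := by
      have := hi.trans hj.symm
      exact this
    rw [Matrix.toSquareBlock_def]
    simp only [Matrix.of_apply, Matrix.one_apply, Subtype.mk.injEq]
    unfold Kmat
    split_ifs with h1 h2 h2
    · subst h1; subst h2; simp
    · subst h1; simp [Ne.symm h2]
    · subst h2
      have : i ≠ f i := by
        intro hh
        have := hd i h1
        rw [← hh] at this
        omega
      simp [this]
    · have : j ≠ f i := by
        rintro rfl
        have := hd i h1
        omega
      simp [Ne.symm h2, this]
  rw [this, Matrix.det_one]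

lemma det_Kmat_not_acyc {root : V} {f : V → V} (h : ¬ Acyc root f) :
    (Kmat root f).det = 0 := by
  classical
  unfold Acyc at h
  push Not at h
  obtain ⟨v, hv⟩ := h
  let x : V → ℤ := fun u => if ∀ k, f^[k] u ≠ root then 1 else 0
  apply Matrix.exists_mulVec_eq_zero_iff.mp
  refine ⟨x, ?_, ?_⟩
  · intro hx
    have := congrFun hx v
    simp [x, hv] at this
  · ext u
    simp only [Matrix.mulVec, Kmat, Pi.zero_apply]
    split_ifs with hu
    · subst hu
      have : ¬ ∀ k, f^[k] u ≠ u := fun hh => hh 0 rfl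
      simp [x, this]
    · have : (∀ k, f^[k] u ≠ root) ↔ (∀ k, f^[k] (f u) ≠ root) := by
        constructor
        · intro hh k
          exact hh (k+1)
        · intro hh k
          cases k with
          | zero => simpa using hu
          | succ k => exact hh k
      rw [sub_dotProduct, single_dotProduct, single_dotProduct]
      simp only [x, this]
      simp

lemma det_reduced (G : SimpleGraph V) [DecidableRel G.Adj] (root : V) :
    ((G.lapMatrix ℤ).updateRow root (Pi.single root 1)).det =
      Nat.card {f : V → V // (f root = root ∧ ∀ v, v ≠ root → G.Adj v (f v)) ∧ Acyc root f} := by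
  classical
  let A : V → Finset V := fun v => if v = root then {root} else G.neighborFinset v
  have hrow : ((G.lapMatrix ℤ).updateRow root (Pi.single root 1)) = fun v => ∑ u ∈ A v,
      (if v = root then (Pi.single root 1 : V → ℤ) else Pi.single v 1 - Pi.single u 1) := by
    ext v w
    by_cases hv : v = root
    · subst hv; simp [A]
    · simp only [A, hv, if_false, Matrix.updateRow_ne hv]
      rw [Finset.sum_sub_distrib]
      simp [SimpleGraph.lapMatrix, SimpleGraph.degMatrix, SimpleGraph.adjMatrix_apply,
        Finset.sum_apply, Pi.single_apply, Matrix.diagonal_apply]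
      by_cases hvw : v = w
      · subst hvw; simp
      · simp [hvw, Ne.symm hvw]
  have h1 : ((G.lapMatrix ℤ).updateRow root (Pi.single root 1)).det =
      ∑ f ∈ Fintype.piFinset A, (Kmat root f).det := by
    rw [hrow]
    exact (Matrix.detRowAlternating (R := ℤ) (n := V)).toMultilinearMap.map_sum_finset
      (fun v u => if v = root then (Pi.single root 1 : V → ℤ) else Pi.single v 1 - Pi.single u 1) A
  rw [h1]
  have h2 : ∀ f, (Kmat root f).det = if Acyc root f then 1 else 0 := by
    intro f
    split_ifs with h
    · exact det_Kmat_acyc h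
    · exact det_Kmat_not_acyc h
  simp only [h2]
  rw [Finset.sum_boole, Nat.card_eq_fintype_card, Fintype.card_subtype]
  congr 2
  ext f
  simp only [Finset.mem_filter, Fintype.mem_piFinset, Finset.mem_univ, true_and, A]
  refine and_congr_left fun _ => ?_
  constructor
  · intro h
    refine ⟨by simpa using h root, fun v hv => by simpa [hv] using h v⟩
  · rintro ⟨h, h'⟩ v
    by_cases hv : v = root
    · subst hv; simpa using h
    · simpa [hv] using h' v hv

/-- The graph with edges `v — f v`. -/
def toGraph (root : V) (f : V → V) : SimpleGraph V :=
  SimpleGraph.fromRel (fun v w => v ≠ root ∧ w = f v)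

lemma toGraph_adj {root : V} {f : V → V} {d : V → ℕ} (hd : ∀ v, v ≠ root → d v = d (f v) + 1)
    {v w : V} : (toGraph root f).Adj v w ↔ (v ≠ root ∧ w = f v) ∨ (w ≠ root ∧ v = f w) := by
  unfold toGraph
  rw [SimpleGraph.fromRel_adj]
  constructor
  · exact fun h => h.2
  · intro h
    refine ⟨?_, h⟩
    rintro rfl
    rcases h with ⟨h, h'⟩ | ⟨h, h'⟩ <;>
    · have := hd _ h
      rw [← h'] at this
      omega

lemma toGraph_reach {root : V} {f : V → V} {d : V → ℕ} (h0 : d root = 0)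
    (hd : ∀ v, v ≠ root → d v = d (f v) + 1) :
    ∀ k v, d v = k → ∃ p : (toGraph root f).Walk v root, p.length = k := by
  intro k
  induction k with
  | zero =>
    intro v hv
    by_cases h : v = root
    · subst h; exact ⟨.nil, rfl⟩
    · have := hd v h; omega
  | succ k ih =>
    intro v hv
    have h : v ≠ root := by rintro rfl; omega
    obtain ⟨p, hp⟩ := ih (f v) (by have := hd v h; omega)
    exact ⟨.cons ((toGraph_adj hd).2 (Or.inl ⟨h, rfl⟩)) p, by simp [hp]⟩

lemma toGraph_walk_le {root : V} {f : V → V} {d : V → ℕ}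
    (hd : ∀ v, v ≠ root → d v = d (f v) + 1) {v w : V} (p : (toGraph root f).Walk v w) :
    d v ≤ d w + p.length := by
  induction p with
  | nil => simp
  | cons h p ih =>
    rw [toGraph_adj hd] at h
    simp only [SimpleGraph.Walk.length_cons]
    rcases h with ⟨h', rfl⟩ | ⟨h', rfl⟩
    · have := hd _ h'; omega
    · have := hd _ h'; omega

lemma toGraph_dist {root : V} {f : V → V} {d : V → ℕ} (h0 : d root = 0)
    (hd : ∀ v, v ≠ root → d v = d (f v) + 1) (v : V) :
    (toGraph root f).dist v root = d v := by
  obtain ⟨p, hp⟩ := toGraph_reach h0 hd _ v rfl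
  apply le_antisymm
  · rw [← hp]; exact SimpleGraph.dist_le p
  · obtain ⟨q, hq⟩ := (SimpleGraph.Walk.reachable p).exists_walk_length_eq_dist
    have := toGraph_walk_le hd q
    omega

lemma toGraph_connected {root : V} {f : V → V} (h : Acyc root f) :
    (toGraph root f).Connected := by
  obtain ⟨d, h0, hd⟩ := h.exists_depth
  rw [SimpleGraph.connected_iff_exists_forall_reachable]
  refine ⟨root, fun v => ?_⟩
  obtain ⟨p, hp⟩ := toGraph_reach h0 hd _ v rfl
  exact p.reachable.symm

lemma toGraph_isTree {root : V} {f : V → V} (h : Acyc root f) : (toGraph root f).IsTree := by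
  classical
  have hc := toGraph_connected h
  obtain ⟨d, h0, hd⟩ := h.exists_depth
  rw [SimpleGraph.isTree_iff_connected_and_card]
  refine ⟨hc, le_antisymm ?_ hc.card_vert_le_card_edgeSet_add_one⟩
  have hsub : (toGraph root f).edgeSet ⊆
      ((Finset.univ.erase root).image (fun v => s(v, f v)) : Finset (Sym2 V)) := by
    intro e
    induction e with
    | _ v w =>
    intro he
    rw [SimpleGraph.mem_edgeSet, toGraph_adj hd] at he
    simp only [Finset.coe_image, Set.mem_image]
    rcases he with ⟨h, rfl⟩ | ⟨h, rfl⟩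
    · exact ⟨v, by simp [h], rfl⟩
    · exact ⟨w, by simp [h], Sym2.eq_swap⟩
  have h1 := Set.ncard_le_ncard hsub (Finset.finite_toSet _)
  rw [Set.ncard_coe_finset] at h1
  have h2 := Finset.card_image_le (s := Finset.univ.erase root) (f := fun v => s(v, f v))
  rw [Finset.card_erase_of_mem (Finset.mem_univ _), Finset.card_univ] at h2
  have h3 : 0 < Fintype.card V := Fintype.card_pos_iff.2 ⟨root⟩
  rw [Nat.card_coe_set_eq, Nat.card_eq_fintype_card]
  omega

lemma toGraph_inj {root : V} {f g : V → V} (hf : Acyc root f) (hg : Acyc root g)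
    (hf0 : f root = root) (hg0 : g root = root)
    (h : toGraph root f = toGraph root g) : f = g := by
  obtain ⟨d, h0, hd⟩ := hf.exists_depth
  obtain ⟨e, h0', he⟩ := hg.exists_depth
  have hde : d = e := by
    ext v
    rw [← toGraph_dist h0 hd, ← toGraph_dist h0' he, h]
  subst hde
  ext v
  by_cases hv : v = root
  · rw [hv, hf0, hg0]
  · have : (toGraph root g).Adj v (g v) := (toGraph_adj he).2 (Or.inl ⟨hv, rfl⟩)
    rw [← h, toGraph_adj hd] at this
    rcases this with ⟨_, h'⟩ | ⟨h1, h2⟩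
    · exact h'.symm
    · have := hd _ h1
      have := he _ hv
      rw [← h2] at *
      omega

lemma exists_toGraph (root : V) {H : SimpleGraph V} (hH : H.IsTree) :
    ∃ f : V → V, f root = root ∧ (∀ v, v ≠ root → H.Adj v (f v)) ∧ Acyc root f ∧
      toGraph root f = H := by
  classical
  have hc := hH.1
  have key : ∀ v, ∃ u, (v = root → u = root) ∧
      (v ≠ root → H.Adj v u ∧ H.dist u root < H.dist v root) := by
    intro v
    by_cases hv : v = root
    · exact ⟨root, fun _ => rfl, fun h => absurd hv h⟩
    · obtain ⟨p, hp⟩ := (hc.preconnected v root).exists_walk_length_eq_dist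
      cases p with
      | nil => exact absurd rfl hv
      | cons h q =>
        refine ⟨_, fun h => absurd h hv, fun _ => ⟨h, ?_⟩⟩
        have := SimpleGraph.dist_le q
        simp only [SimpleGraph.Walk.length_cons] at hp
        omega
  choose f hf1 hf2 using key
  have hac : Acyc root f := by
    have : ∀ k v, H.dist v root ≤ k → ∃ j, f^[j] v = root := by
      intro k
      induction k with
      | zero =>
        intro v hv
        by_contra hcon
        push Not at hcon
        have := (hf2 v (hcon 0)).2
        omega
      | succ k ih =>
        intro v hv
        by_cases h : v = root
        · exact ⟨0, h⟩
        · obtain ⟨j, hj⟩ := ih (f v) (by have := (hf2 v h).2; omega)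
          exact ⟨j + 1, hj⟩
    exact fun v => this _ v le_rfl
  refine ⟨f, hf1 root rfl, fun v hv => (hf2 v hv).1, hac, ?_⟩
  have hle : toGraph root f ≤ H := by
    obtain ⟨d, h0, hd⟩ := hac.exists_depth
    intro v w hvw
    rw [toGraph_adj hd] at hvw
    rcases hvw with ⟨h, rfl⟩ | ⟨h, rfl⟩
    · exact (hf2 _ h).1
    · exact (hf2 _ h).1.symm
  have hmin := SimpleGraph.isTree_iff_minimal_connected.1 hH
  exact le_antisymm hle (hmin.2 (toGraph_connected hac) hle)

lemma card_trees (G : SimpleGraph V) (root : V) :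
    Nat.card {f : V → V // (f root = root ∧ ∀ v, v ≠ root → G.Adj v (f v)) ∧ Acyc root f} =
      numSpanningTrees G := by
  classical
  have e : {H : G.Subgraph // H.IsSpanning ∧ H.coe.IsTree} ≃
      {H : SimpleGraph V // H ≤ G ∧ H.IsTree} :=
    { toFun := fun H => ⟨H.1.spanningCoe, H.1.spanningCoe_le,
        (H.1.spanningCoeEquivCoeOfSpanning H.2.1).isTree_iff.2 H.2.2⟩
      invFun := fun H => ⟨SimpleGraph.toSubgraph H.1 H.2.1, fun v => trivial, by
        rw [← ((SimpleGraph.toSubgraph H.1 H.2.1).spanningCoeEquivCoeOfSpanning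
          (fun v => trivial)).isTree_iff]
        exact H.2.2⟩
      left_inv := by
        rintro ⟨H, h1, h2⟩
        apply Subtype.ext
        ext v w
        · simp [h1 v]
        · rfl
      right_inv := by
        rintro ⟨H, h1, h2⟩
        rfl }
  unfold numSpanningTrees
  rw [Nat.card_congr e]
  refine Nat.card_congr (Equiv.ofBijective (fun f => ⟨toGraph root f.1, ?_, toGraph_isTree f.2.2⟩)
    ⟨?_, ?_⟩)
  · obtain ⟨d, h0, hd⟩ := f.2.2.exists_depth
    intro v w hvw
    rw [toGraph_adj hd] at hvw
    rcases hvw with ⟨h, rfl⟩ | ⟨h, rfl⟩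
    · exact f.2.1.2 _ h
    · exact (f.2.1.2 _ h).symm
  · rintro ⟨f, hf⟩ ⟨g, hg⟩ h
    apply Subtype.ext
    exact toGraph_inj hf.2 hg.2 hf.1.1 hg.1.1 (congrArg Subtype.val h)
  · rintro ⟨H, h1, h2⟩
    obtain ⟨f, a, b, c, d⟩ := exists_toGraph root h2
    exact ⟨⟨f, ⟨a, fun v hv => h1 (b v hv)⟩, c⟩, Subtype.ext d⟩

/-- Matrix tree theorem in the form `det (L + J) = N² τ`. -/
theorem matrix_tree (G : SimpleGraph V) [DecidableRel G.Adj] (root : V) :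
    (G.lapMatrix ℤ + Matrix.of (fun _ _ => 1)).det =
      (Fintype.card V : ℤ) ^ 2 * numSpanningTrees G := by
  classical
  rw [← card_trees G root, ← det_reduced]
  set L := G.lapMatrix ℤ with hL
  set M : Matrix V V ℤ := L + Matrix.of (fun _ _ => 1) with hM
  have hLsum : ∀ v, ∑ w, L v w = 0 := by
    intro v
    have := congrFun (G.lapMatrix_mulVec_const_eq_zero (R := ℤ)) v
    simpa [Matrix.mulVec, dotProduct] using this
  have hLsum' : ∀ w, ∑ v, L v w = 0 := by
    intro w
    rw [← hLsum w]
    refine Finset.sum_congr rfl fun v _ => ?_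
    exact (G.isSymm_lapMatrix (R := ℤ)).apply w v
  have h1 : M.det = (Fintype.card V : ℤ) * (M.updateRow root (fun _ => 1)).det := by
    have := Matrix.det_updateRow_sum M root (fun _ => 1)
    have hs : ∑ k, (1 : ℤ) • M k = (Fintype.card V : ℤ) • fun _ => 1 := by
      ext w
      rw [Finset.sum_apply]
      have h' : ∀ k, ((1 : ℤ) • M k) w = L k w + 1 := fun k => by simp [hM]
      simp only [h', Finset.sum_add_distrib, hLsum']
      simp
    rw [hs, Matrix.det_updateRow_smul, one_smul] at this
    exact this.symm
  have h2 : (M.updateRow root (fun _ => 1)).det = (L.updateRow root (fun _ => 1)).det := by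
    refine Matrix.det_eq_of_forall_row_eq_smul_add_const (fun v => if v = root then 0 else 1) root
      (by simp) ?_
    intro i j
    by_cases hi : i = root
    · subst hi; simp
    · simp [hi, hM, Matrix.updateRow_ne]
  have h3 : (L.updateRow root (fun _ => 1)).det =
      (Fintype.card V : ℤ) * (L.updateRow root (Pi.single root 1)).det := by
    have hz : (L.updateRow root
        ((fun _ => 1) + (-(Fintype.card V : ℤ)) • (Pi.single root 1))).det = 0 := by
      apply Matrix.exists_mulVec_eq_zero_iff.mp
      refine ⟨fun _ => 1, ?_, ?_⟩
      · intro h; simpa using congrFun h root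
      · ext v
        by_cases hv : v = root
        · subst hv
          simp [Matrix.mulVec, dotProduct, Finset.sum_add_distrib, Pi.single_apply]
        · simp [Matrix.mulVec, dotProduct, hv, Matrix.updateRow_ne, hLsum]
    rw [Matrix.det_updateRow_add, Matrix.det_updateRow_smul] at hz
    linarith
  rw [h1, h2, h3]
  ring

end MT

namespace MT
open Finset Matrix Polynomial

lemma prod_int (W R : ℤ[X]) (hW : W.Monic) (s : Finset ℕ) (x : ℕ → ℂ) (hx : Set.InjOn x s)
    (hdeg : W.natDegree = s.card) (hroot : ∀ j ∈ s, aeval (x j) W = 0) :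
    ∃ c : ℤ, ∏ j ∈ s, aeval (x j) R = (c : ℂ) := by
  classical
  set WC : ℂ[X] := W.map (Int.castRingHom ℂ) with hWC
  have hmon : WC.Monic := hW.map _
  have hdegC : WC.natDegree = s.card := by rw [hWC, hW.natDegree_map, hdeg]
  have hsp : WC.Splits := IsAlgClosed.splits WC
  have hroots : WC.roots = (s.val.map x) := by
    symm
    apply Multiset.eq_of_le_of_card_le
    · rw [Multiset.le_iff_subset]
      · intro y hy
        obtain ⟨j, hj, rfl⟩ := Multiset.mem_map.1 hy
        rw [mem_roots hmon.ne_zero, IsRoot.def, hWC, eval_map]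
        have := hroot j hj
        rwa [aeval_def] at this
      · exact Multiset.Nodup.map_on (fun a ha b hb h => hx ha hb h) s.nodup
    · rw [Multiset.card_map]
      exact (card_roots' WC).trans hdegC.le
  refine ⟨resultant W R W.natDegree R.natDegree, ?_⟩
  have h1 := resultant_eq_prod_eval WC (R.map (Int.castRingHom ℂ)) R.natDegree natDegree_map_le hsp
  have h2 := resultant_map_map W R W.natDegree R.natDegree (Int.castRingHom ℂ)
  rw [hdegC, ← hdeg, hmon.leadingCoeff, one_pow, one_mul, hroots, h2] at h1
  rw [eq_intCast] at h1
  rw [h1, Multiset.map_map]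
  rw [Finset.prod]
  congr 1
  apply Multiset.map_congr rfl
  intro j _
  simp [eval_map, aeval_def]

lemma S_monic (k : ℕ) : IsMonicOfDegree (Chebyshev.S ℤ k) k ∧
    IsMonicOfDegree (Chebyshev.S ℤ ((k : ℤ) + 1)) (k + 1) := by
  induction k with
  | zero => 
    constructor
    · simp
    · simpa using isMonicOfDegree_X ℤ
  | succ k ih =>
    refine ⟨by exact_mod_cast ih.2, ?_⟩
    have : Chebyshev.S ℤ (((k + 1 : ℕ) : ℤ) + 1) =
        X * Chebyshev.S ℤ ((k : ℤ) + 1) - Chebyshev.S ℤ k := by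
      rw [← Chebyshev.S_add_two]; congr 1
    rw [this, show k + 1 + 1 = 1 + (k + 1) by ring]
    refine ((isMonicOfDegree_X ℤ).mul ih.2).sub ?_
    rw [ih.1.natDegree_eq]
    omega

lemma S_eval (z : ℂ) (hz : z ≠ 0) (k : ℕ) :
    (z - z⁻¹) * aeval (z + z⁻¹) (Chebyshev.S ℤ k) = z ^ (k + 1) - z⁻¹ ^ (k + 1) ∧
    (z - z⁻¹) * aeval (z + z⁻¹) (Chebyshev.S ℤ ((k : ℤ) + 1)) = z ^ (k + 2) - z⁻¹ ^ (k + 2) := by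
  induction k with
  | zero => constructor <;> simp <;> ring
  | succ k ih =>
    refine ⟨by exact_mod_cast ih.2, ?_⟩
    have : Chebyshev.S ℤ (((k + 1 : ℕ) : ℤ) + 1) =
        X * Chebyshev.S ℤ ((k : ℤ) + 1) - Chebyshev.S ℤ k := by
      rw [← Chebyshev.S_add_two]; congr 1
    rw [this, map_sub, map_mul, aeval_X, mul_sub, ih.1]
    rw [show (z - z⁻¹) * ((z + z⁻¹) * aeval (z + z⁻¹) (Chebyshev.S ℤ ((k : ℤ) + 1))) = 
      (z + z⁻¹) * ((z - z⁻¹) * aeval (z + z⁻¹) (Chebyshev.S ℤ ((k : ℤ) + 1))) by ring, ih.2]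
    have h : z * z⁻¹ = 1 := mul_inv_cancel₀ hz
    linear_combination (z ^ (k+1) - z⁻¹ ^ (k+1)) * h

lemma add_inv_eq {z w : ℂ} (hz : z ≠ 0) (hw : w ≠ 0) (h : z + z⁻¹ = w + w⁻¹) :
    z = w ∨ z * w = 1 := by
  have : (z - w) * (z * w - 1) = 0 := by
    field_simp at h
    linear_combination h
  rcases mul_eq_zero.1 this with h | h
  · exact Or.inl (sub_eq_zero.1 h)
  · exact Or.inr (sub_eq_zero.1 h)

lemma half_prod {n k : ℕ} (hn : n = 2 * k + 1 ∨ n = 2 * k + 2) {ζ : ℂ} (hζ : IsPrimitiveRoot ζ n)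
    (R : ℤ[X]) :
    ∃ c : ℤ, ∏ j ∈ range k, aeval (ζ ^ (j + 1) + (ζ ^ (j + 1))⁻¹) R = (c : ℂ) := by
  have hn0 : n ≠ 0 := by omega
  have hζ0 : ζ ≠ 0 := hζ.ne_zero hn0
  have hinj : Set.InjOn (fun j => ζ ^ (j + 1) + (ζ ^ (j + 1))⁻¹) (range k : Set ℕ) := by
    intro i hi j hj h
    have hi' : i < k := by simpa using hi
    have hj' : j < k := by simpa using hj
    rcases add_inv_eq (pow_ne_zero _ hζ0) (pow_ne_zero _ hζ0) h with h | h
    · have := hζ.pow_inj (by omega) (by omega) h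
      omega
    · rw [← pow_add] at h
      have := Nat.le_of_dvd (by omega) ((hζ.pow_eq_one_iff_dvd _).1 h)
      omega
  have hne : ∀ j ∈ range k, ζ ^ (j + 1) - (ζ ^ (j + 1))⁻¹ ≠ 0 := by
    intro j hj h
    have hj' : j < k := by simpa using hj
    have h0 : ζ ^ (j + 1) ≠ 0 := pow_ne_zero _ hζ0
    field_simp at h
    rw [← pow_mul, mul_zero, sub_eq_zero] at h
    have := Nat.le_of_dvd (by omega) ((hζ.pow_eq_one_iff_dvd _).1 h)
    omega
  have hpw : ∀ j a b, a + b = n → (ζ ^ (j + 1)) ^ a = (ζ ^ (j + 1))⁻¹ ^ b := by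
    intro j a b hab
    have h0 : ζ ^ (j + 1) ≠ 0 := pow_ne_zero _ hζ0
    rw [inv_pow]
    apply eq_inv_of_mul_eq_one_left
    rw [← pow_add, hab, ← pow_mul, mul_comm, pow_mul, hζ.pow_eq_one, one_pow]
  rcases hn with hn | hn
  · rcases k with _ | k
    · exact ⟨1, by simp⟩
    have hW : IsMonicOfDegree (Chebyshev.S ℤ ((k : ℤ) + 1) + Chebyshev.S ℤ k) (k + 1) := by
      refine (S_monic k).2.add_right ?_
      rw [(S_monic k).1.natDegree_eq]; omega
    refine prod_int (Chebyshev.S ℤ ((k : ℤ) + 1) + Chebyshev.S ℤ k) R hW.monic _ _ hinj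
      (by simpa using hW.natDegree_eq) ?_
    intro j hj
    apply (mul_eq_zero.1 (?_ : _ * _ = _)).resolve_left (hne j hj)
    rw [map_add, mul_add, (S_eval _ (pow_ne_zero _ hζ0) k).1, (S_eval _ (pow_ne_zero _ hζ0) k).2]
    rw [hpw j (k + 2) (k + 1) (by omega), hpw j (k + 1) (k + 2) (by omega)]
    ring
  · refine prod_int (Chebyshev.S ℤ k) R (S_monic k).1.monic _ _ hinj
      (by simpa using (S_monic k).1.natDegree_eq) ?_
    intro j hj
    apply (mul_eq_zero.1 (?_ : _ * _ = _)).resolve_left (hne j hj)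
    rw [(S_eval _ (pow_ne_zero _ hζ0) k).1]
    rw [hpw j (k + 1) (k + 1) (by omega)]
    ring

lemma pair_prod_odd {k : ℕ} {ζ : ℂ} (hζ : ζ ^ (2 * k + 1) = 1) (f : ℂ → ℂ)
    (hf : ∀ z, f z⁻¹ = f z) :
    ∏ j ∈ range (2 * k), f (ζ ^ (j + 1)) = (∏ j ∈ range k, f (ζ ^ (j + 1))) ^ 2 := by
  rw [two_mul, prod_range_add, sq]
  congr 1
  rw [← prod_range_reflect]
  refine prod_congr rfl fun j hj => ?_
  have hj' : j < k := by simpa using hj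
  rw [← hf]
  congr 1
  symm
  apply eq_inv_of_mul_eq_one_left
  rw [← pow_add, ← hζ]
  congr 1
  omega

lemma pair_prod_even {k : ℕ} {ζ : ℂ} (hζ : ζ ^ (2 * k + 2) = 1) (f : ℂ → ℂ)
    (hf : ∀ z, f z⁻¹ = f z) :
    ∏ j ∈ range (2 * k + 1), f (ζ ^ (j + 1)) =
      f (ζ ^ (k + 1)) * (∏ j ∈ range k, f (ζ ^ (j + 1))) ^ 2 := by
  rw [show 2 * k + 1 = k + 1 + k by ring, prod_range_add, prod_range_succ, sq]
  rw [mul_comm (∏ j ∈ range k, f (ζ ^ (j + 1))), mul_assoc]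
  congr 2
  rw [← prod_range_reflect]
  refine prod_congr rfl fun j hj => ?_
  have hj' : j < k := by simpa using hj
  rw [← hf]
  congr 1
  symm
  apply eq_inv_of_mul_eq_one_left
  rw [← pow_add, ← hζ]
  congr 1
  omega

/-! The symmetric Laurent polynomial. -/

lemma exists_C_nat (k : ℕ) : (∃ Q : ℤ[X], ∀ z : ℂ, z ≠ 0 →
      aeval (z + z⁻¹) Q = z ^ k + z⁻¹ ^ k) ∧ (∃ Q : ℤ[X], ∀ z : ℂ, z ≠ 0 →
      aeval (z + z⁻¹) Q = z ^ (k + 1) + z⁻¹ ^ (k + 1)) := by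
  induction k with
  | zero => 
    refine ⟨⟨2, fun z hz => ?_⟩, ⟨X, fun z hz => by simp⟩⟩
    rw [map_ofNat]; norm_num
  | succ k ih =>
    refine ⟨ih.2, ?_⟩
    obtain ⟨⟨Q, hQ⟩, ⟨Q', hQ'⟩⟩ := ih
    refine ⟨X * Q' - Q, fun z hz => ?_⟩
    rw [map_sub, map_mul, aeval_X, hQ z hz, hQ' z hz]
    have h : z * z⁻¹ = 1 := mul_inv_cancel₀ hz
    linear_combination (z ^ k + z⁻¹ ^ k) * h

lemma exists_C (a b : ℕ) : ∃ Q : ℤ[X], ∀ z : ℂ, z ≠ 0 →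
    aeval (z + z⁻¹) Q = z ^ a * z⁻¹ ^ b + z ^ b * z⁻¹ ^ a := by
  wlog hab : a ≤ b generalizing a b
  · obtain ⟨Q, hQ⟩ := this b a (by omega)
    exact ⟨Q, fun z hz => by rw [hQ z hz, add_comm]⟩
  obtain ⟨c, rfl⟩ := Nat.exists_eq_add_of_le hab
  obtain ⟨Q, hQ⟩ := (exists_C_nat c).1
  refine ⟨Q, fun z hz => ?_⟩
  rw [hQ z hz]
  have h : (z * z⁻¹) ^ a = 1 := by rw [mul_inv_cancel₀ hz, one_pow]
  rw [mul_pow] at h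
  rw [pow_add, pow_add]
  linear_combination (- z ^ c - z⁻¹ ^ c) * h

lemma exists_BB {ι : Type*} (s : Finset ι) (γ : ι → ℕ) : ∃ Q : ℤ[X], ∀ z : ℂ, z ≠ 0 →
    aeval (z + z⁻¹) Q = (∑ i ∈ s, z ^ γ i) * (∑ i ∈ s, z⁻¹ ^ γ i) := by
  classical
  induction s using Finset.induction_on with
  | empty => exact ⟨0, by simp⟩
  | insert a s ha ih =>
    obtain ⟨Q, hQ⟩ := ih
    choose D hD using exists_C
    refine ⟨1 + Q + ∑ i ∈ s, D (γ a) (γ i), fun z hz => ?_⟩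
    rw [sum_insert ha, sum_insert ha, map_add, map_add, map_one, map_sum, hQ z hz]
    rw [sum_congr rfl fun i _ => hD (γ a) (γ i) z hz]
    rw [sum_add_distrib, ← mul_sum, ← sum_mul]
    have h : (z * z⁻¹) ^ γ a = 1 := by rw [mul_inv_cancel₀ hz, one_pow]
    rw [mul_pow] at h
    linear_combination -h

noncomputable def Pz {s t : ℕ} (β : Fin s → ℕ) (γ : Fin t → ℕ) (z : ℂ) : ℂ :=
  (2 * s + t - ∑ i, (z ^ β i + z⁻¹ ^ β i)) ^ 2 - (∑ j, z ^ γ j) * (∑ j, z⁻¹ ^ γ j)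

lemma exists_R {s t : ℕ} (β : Fin s → ℕ) (γ : Fin t → ℕ) :
    ∃ R : ℤ[X], ∀ z : ℂ, z ≠ 0 →
      Pz β γ z = ((1 - z) * (1 - z⁻¹)) * aeval (z + z⁻¹) R := by
  choose D hD using fun k => (exists_C_nat k).1
  obtain ⟨B, hB⟩ := exists_BB univ γ
  let Q : ℤ[X] := (2 * (s : ℤ[X]) + t - ∑ i, D (β i)) ^ 2 - B
  have hQ : ∀ z : ℂ, z ≠ 0 → Pz β γ z = aeval (z + z⁻¹) Q := by
    intro z hz
    simp only [Q, Pz, map_sub, map_pow, map_add, map_mul, map_sum, hB z hz, hD _ z hz,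
      map_natCast, map_ofNat]
  have h0 : Q.IsRoot 2 := by
    have h1 := hQ 1 one_ne_zero
    have h2 : Pz β γ 1 = 0 := by simp [Pz]; ring
    rw [h2] at h1
    have h3 : aeval ((1:ℂ) + 1⁻¹) Q = ((Q.eval 2 : ℤ) : ℂ) := by
      rw [show ((1:ℂ) + 1⁻¹) = algebraMap ℤ ℂ 2 by norm_num, aeval_algebraMap_apply]
      simp
    rw [h3] at h1
    exact_mod_cast h1.symm
  obtain ⟨R, hR⟩ := dvd_iff_isRoot.2 h0
  refine ⟨-R, fun z hz => ?_⟩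
  rw [hQ z hz, hR, map_mul, map_sub, aeval_X, map_neg]
  have h : z * z⁻¹ = 1 := mul_inv_cancel₀ hz
  have h2 : aeval (z + z⁻¹) (C (2:ℤ)) = (2 : ℂ) := by rw [aeval_C]; simp
  rw [h2]
  linear_combination (aeval (z + z⁻¹) R) * h

lemma neg_one_sum {m : ℕ} (γ : Fin m → ℕ) : ∑ j, (-1 : ℂ) ^ γ j =
    ((univ.filter fun j => Even (γ j)).card : ℂ) - ((univ.filter fun j => Odd (γ j)).card : ℂ) := by
  rw [Finset.card_filter, Finset.card_filter]
  push_cast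
  rw [← sum_sub_distrib]
  refine sum_congr rfl fun j _ => ?_
  rcases Nat.even_or_odd (γ j) with h | h
  · simp [h, Nat.not_odd_iff_even.2 h]
  · simp [h, Nat.not_even_iff_odd.2 h]

lemma card_eo {m : ℕ} (γ : Fin m → ℕ) : (m : ℂ) =
    ((univ.filter fun j => Even (γ j)).card : ℂ) + ((univ.filter fun j => Odd (γ j)).card : ℂ) := by
  have := Finset.card_filter_add_card_filter_not (s := (univ : Finset (Fin m)))
    (fun j => Even (γ j))
  simp only [Nat.not_even_iff_odd, card_univ, Fintype.card_fin] at this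
  exact_mod_cast this.symm

lemma Pz_neg_one {s t : ℕ} (β : Fin s → ℕ) (γ : Fin t → ℕ) :
    Pz β γ (-1) = 4 * ((2 * ((univ.filter fun i => Odd (β i)).card : ℂ) +
      ((univ.filter fun j => Odd (γ j)).card : ℂ)) *
      (2 * ((univ.filter fun i => Odd (β i)).card : ℂ) +
      ((univ.filter fun j => Even (γ j)).card : ℂ))) := by
  have h : ((-1 : ℂ))⁻¹ = -1 := by norm_num
  rw [Pz, h, sum_add_distrib, neg_one_sum, neg_one_sum]
  rw [card_eo β, card_eo γ]
  ring

/-- product over all nontrivial roots of unity -/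
lemma prod_Pz {s t : ℕ} (β : Fin s → ℕ) (γ : Fin t → ℕ) {n : ℕ} {ζ : ℂ}
    (hn : n ≠ 0) (hζ : IsPrimitiveRoot ζ n) :
    ∃ c : ℤ, ∏ j ∈ range (n - 1), Pz β γ (ζ ^ (j + 1)) = (n : ℂ) ^ 2 *
      ((if Even n then ((2 * ((univ.filter fun i => Odd (β i)).card : ℂ) +
      ((univ.filter fun j => Odd (γ j)).card : ℂ)) *
      (2 * ((univ.filter fun i => Odd (β i)).card : ℂ) +
      ((univ.filter fun j => Even (γ j)).card : ℂ))) else 1) * c ^ 2) := by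
  obtain ⟨R, hR⟩ := exists_R β γ
  have hζ0 : ζ ≠ 0 := hζ.ne_zero hn
  have h1 : ∏ j ∈ range (n - 1), Pz β γ (ζ ^ (j + 1)) =
      (n : ℂ) ^ 2 * ∏ j ∈ range (n - 1), aeval (ζ ^ (j + 1) + (ζ ^ (j + 1))⁻¹) R := by
    rw [prod_congr rfl fun j _ => hR _ (pow_ne_zero (j + 1) hζ0)]
    rw [prod_mul_distrib, prod_mul_distrib]
    congr 1
    obtain ⟨m, rfl⟩ := Nat.exists_eq_succ_of_ne_zero hn
    have e1 := hζ.prod_one_sub_pow_eq_order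
    have e2 := hζ.inv.prod_one_sub_pow_eq_order
    simp only [inv_pow] at e2
    rw [Nat.succ_sub_one, e1, e2]
    push_cast; ring
  rw [h1]
  have hf : ∀ z : ℂ, aeval (z⁻¹ + z⁻¹⁻¹) R = aeval (z + z⁻¹) R := fun z => by
    rw [inv_inv, add_comm]
  rcases Nat.even_or_odd n with he | ho
  · obtain ⟨k, hk⟩ : ∃ k, n = 2 * k + 2 := by
      obtain ⟨m, hm⟩ := he
      exact ⟨m - 1, by omega⟩
    obtain ⟨c, hc⟩ := half_prod (Or.inr hk) hζ R
    refine ⟨c, ?_⟩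
    rw [if_pos he]
    congr 1
    rw [show n - 1 = 2 * k + 1 by omega, pair_prod_even (by rw [← hk]; exact hζ.pow_eq_one)
      (fun z => aeval (z + z⁻¹) R) hf, hc]
    congr 1
    have hm1 : ζ ^ (k + 1) = -1 := by
      have h2 : (ζ ^ (k + 1)) ^ 2 = 1 := by
        rw [← pow_mul, show (k + 1) * 2 = n by omega, hζ.pow_eq_one]
      rcases mul_self_eq_one_iff.1 ((sq _).symm.trans h2) with h | h
      · exact absurd h (hζ.pow_ne_one_of_pos_of_lt (by omega) (by omega))
      · exact h
    rw [hm1]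
    have h3 := hR (-1) (by norm_num)
    rw [Pz_neg_one] at h3
    have h4 : ((-1 : ℂ))⁻¹ = -1 := by norm_num
    rw [h4] at h3 ⊢
    linear_combination -h3 / 4
  · obtain ⟨k, hk⟩ := ho
    obtain ⟨c, hc⟩ := half_prod (Or.inl hk) hζ R
    refine ⟨c, ?_⟩
    rw [if_neg (by rw [Nat.not_even_iff_odd]; exact ⟨k, hk⟩)]
    congr 1
    rw [show n - 1 = 2 * k by omega, pair_prod_odd (by rw [← hk]; exact hζ.pow_eq_one)
      (fun z => aeval (z + z⁻¹) R) hf, hc, one_mul]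

end MT

namespace MT
open Finset Matrix ZMod

lemma det_bicirc {n : ℕ} [NeZero n] (g : Fin 2 → Fin 2 → ZMod n → ℂ) :
    (Matrix.of fun (x y : Fin 2 × ZMod n) => g x.1 y.1 (x.2 - y.2)).det =
      ∏ j : ZMod n, (Matrix.of fun a b => ∑ i, stdAddChar (j * i) * g a b i).det := by
  set M : Matrix (Fin 2 × ZMod n) (Fin 2 × ZMod n) ℂ :=
    Matrix.of fun x y => g x.1 y.1 (x.2 - y.2) with hM
  let F : Matrix (Fin 2 × ZMod n) (Fin 2 × ZMod n) ℂ :=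
    Matrix.of fun x y => if x.1 = y.1 then stdAddChar (x.2 * y.2) else 0
  let F' : Matrix (Fin 2 × ZMod n) (Fin 2 × ZMod n) ℂ :=
    Matrix.of fun x y => if x.1 = y.1 then stdAddChar (-(x.2 * y.2)) else 0
  let D : ZMod n → Matrix (Fin 2) (Fin 2) ℂ :=
    fun j => Matrix.of fun a b => ∑ i, stdAddChar (j * i) * g a b i
  have hF : F * F' = (n : ℂ) • (1 : Matrix (Fin 2 × ZMod n) (Fin 2 × ZMod n) ℂ) := by
    ext ⟨a, j⟩ ⟨b, k⟩
    rw [Matrix.mul_apply, Fintype.sum_prod_type, Matrix.smul_apply, Matrix.one_apply]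
    simp only [F, F', Matrix.of_apply, ite_mul, zero_mul, mul_ite, mul_zero]
    rw [Finset.sum_comm]
    simp only [Finset.sum_ite_eq, Finset.sum_ite_eq', Finset.mem_univ, if_true]
    by_cases hab : a = b
    · subst hab
      simp only [if_true]
      have : ∀ x : ZMod n, stdAddChar (j * x) * stdAddChar (-(x * k)) =
          (stdAddChar (x * (j - k)) : ℂ) := by
        intro x
        rw [← AddChar.map_add_eq_mul]
        congr 1; ring
      simp only [this]
      rw [AddChar.sum_mulShift _ (isPrimitive_stdAddChar n)]
      by_cases hjk : j = k
      · subst hjk; simp [ZMod.card]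
      · simp [hjk, sub_eq_zero, Matrix.one_apply]
    · simp [hab, Matrix.one_apply]
  have hdet : F.det ≠ 0 := by
    have := congrArg Matrix.det hF
    rw [Matrix.det_mul, Matrix.det_smul, Matrix.det_one, mul_one] at this
    intro h
    rw [h, zero_mul] at this
    exact pow_ne_zero _ (Nat.cast_ne_zero.2 (NeZero.ne n)) this.symm
  have hFM : F * M = Matrix.blockDiagonal D * F := by
    ext ⟨a, j⟩ ⟨b, k⟩
    rw [Matrix.mul_apply, Matrix.mul_apply, Fintype.sum_prod_type, Fintype.sum_prod_type]
    simp only [F, hM, D, Matrix.of_apply, Matrix.blockDiagonal_apply, ite_mul, zero_mul, mul_ite,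
      mul_zero]
    rw [Finset.sum_comm]
    conv_rhs => rw [Finset.sum_comm]
    simp only [Finset.sum_ite_eq, Finset.mem_univ, if_true, Finset.sum_ite_eq']
    rw [Finset.sum_mul]
    refine Fintype.sum_equiv (Equiv.subRight k) _ _ fun i => ?_
    simp only [Equiv.subRight_apply]
    rw [show j * i = j * (i - k) + j * k by ring, AddChar.map_add_eq_mul]
    ring
  have h := congrArg Matrix.det hFM
  rw [Matrix.det_mul, Matrix.det_mul, Matrix.det_blockDiagonal, mul_comm] at h
  exact mul_right_cancel₀ hdet h

def dEquiv (n : ℕ) : Fin 2 × ZMod n ≃ DihedralGroup n where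
  toFun x := if x.1 = 0 then r x.2 else sr (-x.2)
  invFun x := match x with
    | r i => (0, i)
    | sr i => (1, -i)
  left_inv := by
    rintro ⟨a, i⟩
    fin_cases a <;> simp
  right_inv := by
    rintro (i | i) <;> simp

section
set_option linter.unusedSectionVars false
variable {n s t : ℕ} [NeZero n] (β : Fin s → ℕ) (γ : Fin t → ℕ)

/-- multiplicity function of the connection set -/
def cc (n : ℕ) (z : DihedralGroup n) : ℤ :=
  ∑ i, ((if z = r (β i : ZMod n) then 1 else 0) + (if z = r (-(β i : ZMod n)) then 1 else 0)) +
    ∑ j, (if z = sr (γ j : ZMod n) then 1 else 0)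

lemma cast_inj_of_lt {a b : ℕ} (ha : a < n) (hb : b < n) (h : (a : ZMod n) = b) : a = b := by
  rw [ZMod.natCast_eq_natCast_iff'] at h
  rwa [Nat.mod_eq_of_lt ha, Nat.mod_eq_of_lt hb] at h

lemma cc_eq (hβpos : ∀ i, 0 < β i) (hβmono : StrictMono β) (hγmono : StrictMono γ)
    (hβn : ∀ i, 2 * β i < n) (hγn : ∀ j, γ j ≤ n - 1)
    [DecidablePred (· ∈ dihedralGenSet n β γ)] (z : DihedralGroup n) :
    cc β γ n z = if z ∈ dihedralGenSet n β γ then 1 else 0 := by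
  have hn : 0 < n := Nat.pos_of_ne_zero (NeZero.ne n)
  have hb : ∀ i j, (β i : ZMod n) = β j ↔ i = j := fun i j =>
    ⟨fun h => hβmono.injective (cast_inj_of_lt (by have := hβn i; omega)
      (by have := hβn j; omega) h), fun h => by rw [h]⟩
  have hg : ∀ i j, (γ i : ZMod n) = γ j ↔ i = j := fun i j =>
    ⟨fun h => hγmono.injective (cast_inj_of_lt (by have := hγn i; omega)
      (by have := hγn j; omega) h), fun h => by rw [h]⟩
  have hbb : ∀ i j, (β i : ZMod n) ≠ -β j := fun i j h => by
    rw [eq_neg_iff_add_eq_zero, ← Nat.cast_add, ZMod.natCast_eq_zero_iff] at h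
    have := Nat.le_of_dvd (by have := hβpos i; omega) h
    have := hβn i
    have := hβn j
    omega
  have hbb' : ∀ i j, -(β i : ZMod n) ≠ β j := fun i j h => hbb j i h.symm
  split_ifs with h
  · rcases h with (⟨i, rfl⟩ | ⟨i, rfl⟩) | ⟨i, rfl⟩
    · simp [cc, hb, hbb]
    · simp [cc, hb, hbb']
    · simp [cc, hg]
  · simp only [dihedralGenSet, Set.mem_union, Set.mem_range, not_or, not_exists] at h
    obtain ⟨⟨h1, h2⟩, h3⟩ := h
    simp only [cc, Ne.symm (h1 _), Ne.symm (h2 _), Ne.symm (h3 _)]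
    simp

lemma cc_sum : ∑ z, cc β γ n z = 2 * s + t := by
  simp only [cc, Finset.sum_add_distrib]
  rw [Finset.sum_comm, Finset.sum_comm (s := univ (α := DihedralGroup n)),
    Finset.sum_comm (s := univ (α := DihedralGroup n))]
  simp
  ring


/-- The symbol of `L + J`. -/
def hh (n : ℕ) (z : DihedralGroup n) : ℤ :=
  (if z = 1 then (2 * s + t : ℤ) else 0) - cc β γ n z + 1

lemma adj_iff (hβpos : ∀ i, 0 < β i) (hβn : ∀ i, 2 * β i < n) (x y : DihedralGroup n) :
    (cayleyGraph (dihedralGenSet n β γ)).Adj x y ↔ x⁻¹ * y ∈ dihedralGenSet n β γ := by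
  have hinv : ∀ z, z ∈ dihedralGenSet n β γ → z⁻¹ ∈ dihedralGenSet n β γ := by
    rintro z ((⟨i, rfl⟩ | ⟨i, rfl⟩) | ⟨i, rfl⟩)
    · left; right; exact ⟨i, by simp⟩
    · left; left; exact ⟨i, by simp⟩
    · right; exact ⟨i, by simp⟩
  have hb : ∀ i, (β i : ZMod n) ≠ 0 := fun i h => by
    rw [ZMod.natCast_eq_zero_iff] at h
    have := Nat.le_of_dvd (hβpos i) h
    have := hβn i
    omega
  have h1 : (1 : DihedralGroup n) ∉ dihedralGenSet n β γ := by
    rw [DihedralGroup.one_def]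
    rintro ((⟨i, h⟩ | ⟨i, h⟩) | ⟨i, h⟩)
    · injection h with h
      exact hb i h
    · injection h with h
      exact hb i (neg_eq_zero.1 h)
    · exact absurd h (by intro h; injection h)
  unfold cayleyGraph
  rw [SimpleGraph.fromRel_adj]
  constructor
  · rintro ⟨_, h | h⟩
    · exact h
    · simpa using hinv _ h
  · intro h
    refine ⟨?_, Or.inl h⟩
    rintro rfl
    simp at h
    exact h1 h

lemma lap_eq [DecidableRel (cayleyGraph (dihedralGenSet n β γ)).Adj]
    (hβpos : ∀ i, 0 < β i) (hβmono : StrictMono β) (hγmono : StrictMono γ)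
    (hβn : ∀ i, 2 * β i < n) (hγn : ∀ j, γ j ≤ n - 1) (x y : DihedralGroup n) :
    ((cayleyGraph (dihedralGenSet n β γ)).lapMatrix ℤ +
      (Matrix.of (fun _ _ => 1) : Matrix (DihedralGroup n) (DihedralGroup n) ℤ)) x y =
      hh β γ n (x⁻¹ * y) := by
  classical
  have hadj : ∀ x y, (if (cayleyGraph (dihedralGenSet n β γ)).Adj x y then (1 : ℤ) else 0) =
      cc β γ n (x⁻¹ * y) := by
    intro x y
    rw [cc_eq β γ hβpos hβmono hγmono hβn hγn]
    simp only [adj_iff β γ hβpos hβn]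
  have hdeg : ((cayleyGraph (dihedralGenSet n β γ)).degree x : ℤ) = 2 * s + t := by
    rw [← cc_sum (n := n) β γ, ← SimpleGraph.card_neighborFinset_eq_degree,
      SimpleGraph.neighborFinset_eq_filter, Finset.card_filter]
    push_cast
    simp only [hadj]
    exact Fintype.sum_equiv (Equiv.mulLeft x⁻¹) _ _ fun y => rfl
  rw [Matrix.add_apply, SimpleGraph.lapMatrix, Matrix.sub_apply, SimpleGraph.adjMatrix_apply, hadj,
    SimpleGraph.degMatrix, Matrix.diagonal_apply, hdeg]
  simp only [Matrix.of_apply, hh, inv_mul_eq_one]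

lemma sum_chi (j : ZMod n) : ∑ i : ZMod n, stdAddChar (j * i) = if j = 0 then (n : ℂ) else 0 := by
  have := AddChar.sum_mulShift j (isPrimitive_stdAddChar n)
  rw [ZMod.card] at this
  rw [Fintype.sum_congr _ _ fun i => by rw [mul_comm j i], this]
  split_ifs <;> simp

lemma chi_nat (j : ZMod n) (k : ℕ) : (stdAddChar (j * (k : ZMod n)) : ℂ) = stdAddChar j ^ k := by
  rw [mul_comm, ← nsmul_eq_mul, AddChar.map_nsmul_eq_pow]

lemma chi_neg (j : ZMod n) (k : ℕ) :
    (stdAddChar (-(j * (k : ZMod n))) : ℂ) = (stdAddChar j)⁻¹ ^ k := by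
  rw [AddChar.map_neg_eq_inv, chi_nat, inv_pow]

lemma sum_r (j : ZMod n) : ∑ i : ZMod n, stdAddChar (j * i) * (hh β γ n (r i) : ℂ) =
    2 * s + t - ∑ i, (stdAddChar j ^ β i + (stdAddChar j)⁻¹ ^ β i) +
      if j = 0 then (n : ℂ) else 0 := by
  simp only [hh, cc, DihedralGroup.one_def]
  push_cast
  simp only [mul_add, mul_sub, Finset.sum_add_distrib, Finset.sum_sub_distrib, mul_one, sum_chi]
  congr 1
  simp only [DihedralGroup.r.injEq, reduceCtorEq, if_false, Finset.sum_const_zero, mul_zero,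
    add_zero, Finset.mul_sum]
  rw [Finset.sum_comm, Finset.sum_comm (s := univ (α := ZMod n)) (t := univ (α := Fin s))]
  simp [chi_nat, chi_neg]

lemma sum_sr (j : ZMod n) : ∑ i : ZMod n, stdAddChar (j * i) * (hh β γ n (sr i) : ℂ) =
    - ∑ k, stdAddChar j ^ γ k + if j = 0 then (n : ℂ) else 0 := by
  simp only [hh, cc, DihedralGroup.one_def]
  push_cast
  simp only [mul_add, mul_sub, Finset.sum_add_distrib, Finset.sum_sub_distrib, mul_one, sum_chi]
  congr 1
  simp only [DihedralGroup.sr.injEq, reduceCtorEq, if_false, Finset.sum_const_zero, mul_zero,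
    zero_add, Finset.mul_sum]
  rw [Finset.sum_comm (s := univ (α := ZMod n)) (t := univ (α := Fin t))]
  simp [chi_nat]

lemma sum_neg (f : ZMod n → ℂ) (j : ZMod n) :
    ∑ i : ZMod n, stdAddChar (j * i) * f (-i) = ∑ i, stdAddChar (-j * i) * f i :=
  Fintype.sum_equiv (Equiv.neg _) _ _ fun i => by simp

lemma det_hh : (Matrix.of fun x y : DihedralGroup n => (hh β γ n (x⁻¹ * y) : ℂ)).det =
    ∏ j : ZMod n, ((2 * s + t - ∑ i, (stdAddChar j ^ β i + (stdAddChar j)⁻¹ ^ β i) +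
      if j = 0 then (n : ℂ) else 0) ^ 2 -
      (- ∑ k, stdAddChar j ^ γ k + if j = 0 then (n : ℂ) else 0) *
      (- ∑ k, (stdAddChar j)⁻¹ ^ γ k + if j = 0 then (n : ℂ) else 0)) := by
  rw [← Matrix.det_submatrix_equiv_self (dEquiv n)]
  let g : Fin 2 → Fin 2 → ZMod n → ℂ := fun a b d =>
    if a = 0 then (if b = 0 then hh β γ n (r (-d)) else hh β γ n (sr d))
    else (if b = 0 then hh β γ n (sr (-d)) else hh β γ n (r d))
  have : (Matrix.of fun x y : DihedralGroup n => (hh β γ n (x⁻¹ * y) : ℂ)).submatrix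
      (dEquiv n) (dEquiv n) = Matrix.of fun x y => g x.1 y.1 (x.2 - y.2) := by
    ext ⟨a, i⟩ ⟨b, k⟩
    simp only [Matrix.submatrix_apply, Matrix.of_apply, dEquiv, Equiv.coe_fn_mk, g]
    fin_cases a <;> fin_cases b <;> simp <;> congr 2 <;> ring_nf
  rw [this, det_bicirc]
  refine Finset.prod_congr rfl fun j _ => ?_
  rw [Matrix.det_fin_two]
  simp only [Matrix.of_apply, g, if_true, one_ne_zero, if_false]
  rw [sum_neg (fun i => (hh β γ n (r i) : ℂ)), sum_neg (fun i => (hh β γ n (sr i) : ℂ)),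
    sum_r, sum_sr, sum_r, sum_sr]
  simp only [AddChar.map_neg_eq_inv, inv_inv, neg_eq_zero]
  rw [Finset.sum_congr rfl fun i _ => add_comm ((stdAddChar j)⁻¹ ^ β i) (stdAddChar j ^ β i)]
  ring

lemma prod_zmod (f : ZMod n → ℂ) : ∏ j, f j = f 0 * ∏ k ∈ range (n - 1), f ((k + 1 : ℕ)) := by
  obtain ⟨m, rfl⟩ := Nat.exists_eq_succ_of_ne_zero (NeZero.ne n)
  have : ∏ j, f j = ∏ k ∈ range (m + 1), f (k : ℕ) := by
    refine Finset.prod_nbij' (fun j => j.val) (fun k => (k : ZMod (m + 1))) ?_ ?_ ?_ ?_ ?_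
    · intro j _; simpa using ZMod.val_lt j
    · simp
    · intro j _; simp
    · intro k hk; exact ZMod.val_cast_of_lt (by simpa using hk)
    · intro j _; simp
  rw [this, prod_range_succ', mul_comm]
  simp

lemma chi_prim : IsPrimitiveRoot (stdAddChar (1 : ZMod n) : ℂ) n := by
  have h : ∀ k : ℕ, (stdAddChar (1 : ZMod n) : ℂ) ^ k = stdAddChar (k : ZMod n) := by
    intro k; rw [← chi_nat, one_mul]
  refine ⟨by rw [h]; simp, fun l hl => ?_⟩
  rw [h, ← AddChar.map_zero_eq_one (stdAddChar (N := n))] at hl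
  exact (ZMod.natCast_eq_zero_iff _ _).1 (injective_stdAddChar hl)

lemma main_formula 
    (hβpos : ∀ i, 0 < β i) (hβmono : StrictMono β) (hγmono : StrictMono γ)
    (hβn : ∀ i, 2 * β i < n) (hγn : ∀ j, γ j ≤ n - 1) :
    ∃ c : ℤ, (numSpanningTrees (cayleyGraph (dihedralGenSet n β γ)) : ℤ) = n * t *
      ((if Even n then ((2 * ((univ.filter fun i => Odd (β i)).card : ℤ) +
      ((univ.filter fun j => Odd (γ j)).card : ℤ)) *
      (2 * ((univ.filter fun i => Odd (β i)).card : ℤ) +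
      ((univ.filter fun j => Even (γ j)).card : ℤ))) else 1) * c ^ 2) := by
  classical
  obtain ⟨c, hc⟩ := prod_Pz β γ (NeZero.ne n) (chi_prim (n := n))
  refine ⟨c, ?_⟩
  have hn0 : (n : ℂ) ≠ 0 := Nat.cast_ne_zero.2 (NeZero.ne n)
  have h1 := matrix_tree (cayleyGraph (dihedralGenSet n β γ)) 1
  have h2 : ((cayleyGraph (dihedralGenSet n β γ)).lapMatrix ℤ + Matrix.of (fun _ _ => 1)) =
      Matrix.of fun x y => hh β γ n (x⁻¹ * y) := by
    ext x y
    exact lap_eq β γ hβpos hβmono hγmono hβn hγn x y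
  rw [h2] at h1
  have h3 := congrArg (Int.castRingHom ℂ) h1
  rw [RingHom.map_det] at h3
  have h4 : (Int.castRingHom ℂ).mapMatrix (Matrix.of fun x y => hh β γ n (x⁻¹ * y)) =
      Matrix.of fun x y : DihedralGroup n => (hh β γ n (x⁻¹ * y) : ℂ) := by
    ext x y; simp
  rw [h4, det_hh, prod_zmod, DihedralGroup.card] at h3
  have h5 : ∀ k ∈ range (n - 1), (((k + 1 : ℕ) : ZMod n) ≠ 0) := by
    intro k hk h
    have hk' : k < n - 1 := by simpa using hk
    rw [ZMod.natCast_eq_zero_iff] at h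
    have := Nat.le_of_dvd (by omega) h
    omega
  have h6 : ∀ k : ℕ, (stdAddChar ((k + 1 : ℕ) : ZMod n) : ℂ) =
      stdAddChar (1 : ZMod n) ^ (k + 1) := by
    intro k; rw [← chi_nat, one_mul]
  rw [Finset.prod_congr rfl (g := fun k => Pz β γ (stdAddChar (1 : ZMod n) ^ (k + 1)))
    (fun k hk => by
      rw [if_neg (h5 k hk), h6, Pz]; ring), hc] at h3
  simp only [if_true, AddChar.map_zero_eq_one, one_pow, inv_one, sum_const, card_univ,
    Fintype.card_fin, nsmul_eq_mul, mul_one, eq_intCast] at h3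
  push_cast at h3
  have h7 : (4 * (n : ℂ) ^ 2) * (numSpanningTrees (cayleyGraph (dihedralGenSet n β γ)) : ℂ) =
      (4 * (n : ℂ) ^ 2) * (n * t *
      ((if Even n then ((2 * ((univ.filter fun i => Odd (β i)).card : ℂ) +
      ((univ.filter fun j => Odd (γ j)).card : ℂ)) *
      (2 * ((univ.filter fun i => Odd (β i)).card : ℂ) +
      ((univ.filter fun j => Even (γ j)).card : ℂ))) else 1) * c ^ 2)) := by
    linear_combination -h3
  have h8 := mul_left_cancel₀ (mul_ne_zero (by norm_num) (pow_ne_zero 2 hn0)) h7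
  have : ((numSpanningTrees (cayleyGraph (dihedralGenSet n β γ)) : ℤ) : ℂ) = ((n * t *
      ((if Even n then ((2 * ((univ.filter fun i => Odd (β i)).card : ℤ) +
      ((univ.filter fun j => Odd (γ j)).card : ℤ)) *
      (2 * ((univ.filter fun i => Odd (β i)).card : ℤ) +
      ((univ.filter fun j => Even (γ j)).card : ℤ))) else 1) * c ^ 2) : ℤ) : ℂ) := by
    push_cast
    exact h8
  exact_mod_cast this

end

lemma not_conn_zero {s t : ℕ} (β : Fin s → ℕ) (γ : Fin t → ℕ)
    (hβn : ∀ i, 2 * β i < 0) (hγn : ∀ j, γ j ≤ 0 - 1) :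
    ¬ (cayleyGraph (dihedralGenSet 0 β γ)).Connected := by
  intro hc
  have key : ∀ x y : DihedralGroup 0, (cayleyGraph (dihedralGenSet 0 β γ)).Walk x y →
      (x = r 0 ∨ x = sr 0) → (y = r 0 ∨ y = sr 0) := by
    intro x y p
    induction p with
    | nil => exact id
    | cons h p ih =>
      rename_i u v w
      intro hu
      apply ih
      unfold cayleyGraph at h
      rw [SimpleGraph.fromRel_adj] at h
      have hS : ∀ z, z ∈ dihedralGenSet 0 β γ → z = sr 0 := by
        rintro z ((⟨i, rfl⟩ | ⟨i, rfl⟩) | ⟨i, rfl⟩)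
        · exact absurd (hβn i) (by omega)
        · exact absurd (hβn i) (by omega)
        · have : γ i = 0 := by have := hγn i; omega
          simp [this]
      have hv : v = u * sr 0 := by
        rcases h.2 with h | h
        · rw [← hS _ h]; simp
        · have := hS _ h
          rw [inv_mul_eq_iff_eq_mul] at this
          rw [this]; simp [mul_assoc]
      rw [hv]
      rcases hu with rfl | rfl <;> simp
  obtain ⟨p⟩ := hc.preconnected (r 0) (r 1)
  rcases key _ _ p (Or.inl rfl) with h | h
  · injection h with h
    exact absurd h (by decide)
  · injection h

end MT

theorem stmt17 (s t : ℕ) (ht : 0 < t) (β : Fin s → ℕ) (γ : Fin t → ℕ)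
    (hβpos : ∀ i, 0 < β i) (hβmono : StrictMono β) (hγmono : StrictMono γ)
    (βodd γodd γeven : ℕ)
    (hβodd : βodd = (Finset.univ.filter fun i => Odd (β i)).card)
    (hγodd : γodd = (Finset.univ.filter fun j => Odd (γ j)).card)
    (hγeven : γeven = (Finset.univ.filter fun j => Even (γ j)).card)
    (δ : ℕ) (hδ : Squarefree δ)
    (hξ : ∃ m : ℕ, (2 * βodd + γodd) * (2 * βodd + γeven) = δ * m ^ 2) :
    ∃ a : ℕ → ℤ, ∀ n : ℕ,
      (∀ i, 2 * β i < n) → (∀ j, γ j ≤ n - 1) →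
      (cayleyGraph (dihedralGenSet n β γ)).Connected →
      (Odd n →
        (numSpanningTrees (cayleyGraph (dihedralGenSet n β γ)) : ℤ) =
          (n : ℤ) * t * (a n) ^ 2) ∧
      (Even n →
        (numSpanningTrees (cayleyGraph (dihedralGenSet n β γ)) : ℤ) =
          (n : ℤ) * t * δ * (a n) ^ 2) := by

  classical
  obtain ⟨m, hm⟩ := hξ
  have key : ∀ n : ℕ, ∃ c : ℤ,
      (∀ i, 2 * β i < n) → (∀ j, γ j ≤ n - 1) →
      (cayleyGraph (dihedralGenSet n β γ)).Connected →
      (Odd n →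
        (numSpanningTrees (cayleyGraph (dihedralGenSet n β γ)) : ℤ) =
          (n : ℤ) * t * c ^ 2) ∧
      (Even n →
        (numSpanningTrees (cayleyGraph (dihedralGenSet n β γ)) : ℤ) =
          (n : ℤ) * t * δ * c ^ 2) := by
    intro n
    by_cases hn : n = 0
    · subst hn
      exact ⟨0, fun h1 h2 h3 => absurd h3 (MT.not_conn_zero β γ h1 h2)⟩
    haveI : NeZero n := ⟨hn⟩
    by_cases h1 : ∀ i, 2 * β i < n
    · by_cases h2 : ∀ j, γ j ≤ n - 1
      · obtain ⟨c, hc⟩ := MT.main_formula β γ hβpos hβmono hγmono h1 h2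
        rcases Nat.even_or_odd n with he | ho
        · refine ⟨m * c, fun _ _ _ => ⟨fun ho => absurd he (Nat.not_even_iff_odd.2 ho), fun _ => ?_⟩⟩
          rw [if_pos he, ← hβodd, ← hγodd, ← hγeven] at hc
          have hm' : (2 * (βodd : ℤ) + γodd) * (2 * βodd + γeven) = δ * m ^ 2 := by
            exact_mod_cast hm
          rw [hc, hm']
          ring
        · refine ⟨c, fun _ _ _ => ⟨fun _ => ?_, fun he => absurd he (Nat.not_even_iff_odd.2 ho)⟩⟩
          rw [if_neg (Nat.not_even_iff_odd.2 ho), one_mul] at hc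
          exact hc
      · exact ⟨0, fun _ h => absurd h h2⟩
    · exact ⟨0, fun h => absurd h h1⟩
  choose a ha using key
  exact ⟨a, ha⟩
end
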